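/- arXiv:0807.1825 — 2 statements merged into one kernel-verified Lean document; each statement's English description precedes it below -/
import Mathlib

section
/- Let 0 < α < 2, d ≥ 1, D = {x ∈ ℝ^d : x_d > 0}, and A_{d,−α} = Γ((d+α)/2) / (2^{−α} π^{d/2} |Γ(−α/2)|). The constant Γ((1+α)/2)²/π is optimal in the fractional Hardy inequality on ℝ^d for functions supported in D: for every K > Γ((1+α)/2)²/π there exists a smooth compactly supported u : ℝ^d → ℝ with support in D such that (1/2)·A_{d,−α} ∫_{ℝ^d} ∫_{ℝ^d} (u(x) − u(y))² / |x − y|^{d+α} dx dy < K ∫_D u(x)² x_d^{−α} dx. -/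
open MeasureTheory Real Set

/-- The open upper half-space in `ℝ^{d+1}`. -/
def halfSpace (d : ℕ) : Set (EuclideanSpace ℝ (Fin (d + 1))) :=
  {x | 0 < x (Fin.last d)}

/-- The normalizing constant `A_{d,-α}` of the fractional Laplacian in dimension `d`. -/
noncomputable def fracLapConst (d : ℕ) (α : ℝ) : ℝ :=
  Real.Gamma (((d : ℝ) + α) / 2) / (2 ^ (-α) * Real.pi ^ ((d : ℝ) / 2) * |Real.Gamma (-α / 2)|)

open Filter Topology



lemma fh_beta_integrable {a b : ℝ} (ha : 0 < a) (hb : 0 < b) :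
    IntegrableOn (fun x : ℝ => x ^ (a - 1) * (1 - x) ^ (b - 1)) (Ioo 0 1) ∧
    ∫ x in Ioo (0:ℝ) 1, x ^ (a - 1) * (1 - x) ^ (b - 1) = Gamma a * Gamma b / Gamma (a + b) := by
  have h1 := ProbabilityTheory.lintegral_betaPDF_eq_one ha hb
  have hB := ProbabilityTheory.beta_pos ha hb
  rw [ProbabilityTheory.lintegral_betaPDF] at h1
  have hnn : ∀ᵐ x ∂(volume.restrict (Ioo (0:ℝ) 1)),
      0 ≤ 1 / ProbabilityTheory.beta a b * x ^ (a - 1) * (1 - x) ^ (b - 1) := by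
    refine ae_restrict_of_forall_mem measurableSet_Ioo (fun x hx ↦ ?_)
    have := rpow_nonneg hx.1.le (a-1)
    have := rpow_nonneg (sub_nonneg.2 hx.2.le) (b-1)
    positivity
  have hi : Integrable (fun x : ℝ => 1 / ProbabilityTheory.beta a b * x ^ (a - 1) * (1 - x) ^ (b - 1))
      (volume.restrict (Ioo 0 1)) := by
    refine (lintegral_ofReal_ne_top_iff_integrable (by fun_prop) hnn).1 ?_
    rw [h1]; simp
  constructor
  · have := hi.const_mul (ProbabilityTheory.beta a b)
    refine this.congr (Eventually.of_forall fun x => ?_)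
    simp only
    field_simp
  · have h2 := integral_eq_lintegral_of_nonneg_ae hnn hi.aestronglyMeasurable
    rw [h1] at h2
    simp_rw [mul_assoc, integral_const_mul] at h2
    rw [ENNReal.toReal_one] at h2
    field_simp at h2
    rw [h2, ProbabilityTheory.beta]

noncomputable def fhH (α x : ℝ) : ℝ :=
  (1 - x) ^ (-α) / α * ((1 - x) ^ 2 + (x - x * x ^ ((α - 1) / 2)) * (1 - x)
    + x * (1 - x ^ ((α - 1) / 2)) ^ 2)

lemma fhH_deriv {α x : ℝ} (hα : 0 < α) (hx : x ∈ Ioo (0:ℝ) 1) :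
    HasDerivAt (fhH α) ((1 - x ^ ((α - 1) / 2)) ^ 2 * (1 - x) ^ (-1 - α)
      - (3 - α) / (2 * α) * (x ^ ((1 + α) / 2 - 1) * (1 - x) ^ (2 - α - 1))) x := by
  have hx0 : 0 < x := hx.1
  have hy0 : 0 < 1 - x := sub_pos.2 hx.2
  have e1 : (1 - x) ^ (-1 - α) = (1 - x) ^ (-α) / (1 - x) := by
    rw [show -1 - α = -α - 1 by ring, rpow_sub_one hy0.ne']
  have e2 : (1 - x) ^ (2 - α - 1) = (1 - x) ^ (-α) * (1 - x) := by
    rw [show 2 - α - 1 = -α + 1 by ring, rpow_add_one hy0.ne']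
  have e3 : x ^ ((1 + α) / 2 - 1) = x ^ ((α - 1) / 2) := by ring_nf
  have dX : HasDerivAt (fun x : ℝ => x ^ ((α - 1) / 2)) ((α - 1) / 2 * (x ^ ((α - 1) / 2) / x)) x := by
    have := hasDerivAt_rpow_const (x := x) (p := (α - 1) / 2) (Or.inl hx0.ne')
    rwa [rpow_sub_one hx0.ne'] at this
  have dy : HasDerivAt (fun x : ℝ => 1 - x) (-1) x := (hasDerivAt_id x).const_sub 1
  have dY : HasDerivAt (fun x : ℝ => (1 - x) ^ (-α)) (α * ((1 - x) ^ (-α) / (1 - x))) x := by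
    have := dy.rpow_const (p := -α) (Or.inl hy0.ne')
    rw [rpow_sub_one hy0.ne'] at this
    convert this using 1; ring
  have di := hasDerivAt_id x
  have := (dY.div_const α).mul (((dy.pow 2).add ((di.sub (di.mul dX)).mul dy)).add
    (di.mul ((dX.const_sub 1).pow 2)))
  refine this.congr_deriv ?_
  rw [e1, e2, e3]
  simp only [Pi.add_apply, Pi.mul_apply, Pi.sub_apply, Pi.pow_apply, id]
  generalize x ^ ((α - 1) / 2) = X
  generalize (1 - x) ^ (-α) = Y
  have := hy0.ne'
  field_simp
  ring

lemma fhH_tendsto_zero {α : ℝ} (hα : 0 < α) :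
    Tendsto (fhH α) (𝓝[>] 0) (𝓝 (1 / α)) := by
  have hid : Tendsto (fun x : ℝ => x) (𝓝[>] 0) (𝓝 0) := tendsto_nhdsWithin_of_tendsto_nhds tendsto_id
  have hp : ∀ q : ℝ, 0 < q → Tendsto (fun x : ℝ => x ^ q) (𝓝[>] 0) (𝓝 0) := by
    intro q hq
    have := (continuousAt_rpow_const 0 q (Or.inr hq.le)).tendsto
    rw [zero_rpow hq.ne'] at this
    exact tendsto_nhdsWithin_of_tendsto_nhds this
  have h1 : Tendsto (fun x : ℝ => (1 - x) ^ (-α)) (𝓝[>] 0) (𝓝 1) := by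
    have := (hid.const_sub 1).rpow_const (p := -α) (Or.inl (by norm_num))
    simpa using this
  have h2 : Tendsto (fun x : ℝ => (1 - x) ^ (-α) / α * ((1 - x) ^ 2 + (x - x ^ ((1 + α) / 2)) * (1 - x)
    + (x - 2 * x ^ ((1 + α) / 2) + x ^ α))) (𝓝[>] 0) (𝓝 (1 / α * ((1 - 0) ^ 2 + (0 - 0) * (1 - 0)
      + (0 - 2 * 0 + 0)))) :=
    (h1.div_const α).mul ((((hid.const_sub 1).pow 2).add ((hid.sub (hp _ (by linarith))).mul
      (hid.const_sub 1))).add ((hid.sub ((hp _ (by linarith)).const_mul 2)).add (hp _ hα)))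
  rw [show 1 / α * ((1 - 0) ^ 2 + (0 - 0) * (1 - 0) + (0 - 2 * 0 + 0)) = 1 / α by ring] at h2
  refine h2.congr' ?_
  filter_upwards [self_mem_nhdsWithin] with x hx
  have hx0 : 0 < x := hx
  have e1 : x ^ ((1 + α) / 2) = x * x ^ ((α - 1) / 2) := by
    rw [show (1 + α) / 2 = (α - 1) / 2 + 1 by ring, rpow_add_one hx0.ne', mul_comm]
  have e2 : x ^ α = x * (x ^ ((α - 1) / 2)) ^ 2 := by
    rw [sq, ← rpow_add hx0, mul_comm, ← rpow_add_one hx0.ne']; ring_nf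
  rw [fhH, e1, e2]
  ring

lemma fhH_tendsto_one {α : ℝ} (hα : 0 < α) (hα2 : α < 2) :
    Tendsto (fhH α) (𝓝[<] 1) (𝓝 0) := by
  have hid : Tendsto (fun x : ℝ => x) (𝓝[<] 1) (𝓝 1) := tendsto_nhdsWithin_of_tendsto_nhds tendsto_id
  have hy : Tendsto (fun x : ℝ => (1 - x) ^ (2 - α)) (𝓝[<] 1) (𝓝 0) := by
    have := (hid.const_sub 1).rpow_const (p := 2 - α) (Or.inr (by linarith))
    simpa [zero_rpow (by linarith : 2 - α ≠ 0)] using this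
  have hs : Tendsto (fun x : ℝ => (1 - x ^ ((α - 1) / 2)) / (1 - x)) (𝓝[<] 1) (𝓝 ((α - 1) / 2)) := by
    have := hasDerivAt_rpow_const (x := (1:ℝ)) (p := (α - 1) / 2) (Or.inl one_ne_zero)
    rw [hasDerivAt_iff_tendsto_slope] at this
    simp only [one_rpow, mul_one] at this
    have h2 := this.mono_left (nhdsWithin_mono 1 (fun x (hx : x < 1) => ne_of_lt hx : Iio (1:ℝ) ⊆ {1}ᶜ))
    refine h2.congr' ?_
    filter_upwards [self_mem_nhdsWithin] with x hx
    have hx1 : x < 1 := hx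
    rw [slope_def_field, one_rpow, ← neg_sub, ← neg_sub 1 x, neg_div_neg_eq]
  have h2 : Tendsto (fun x : ℝ => (1 - x) ^ (2 - α) / α * (1 + x * ((1 - x ^ ((α - 1) / 2)) / (1 - x))
      + x * ((1 - x ^ ((α - 1) / 2)) / (1 - x)) ^ 2)) (𝓝[<] 1) (𝓝 (0 / α * (1 + 1 * ((α - 1)/2) +
      1 * ((α - 1) / 2) ^ 2))) :=
    (hy.div_const α).mul (((hid.mul hs).const_add 1).add (hid.mul (hs.pow 2)))
  rw [zero_div, zero_mul] at h2
  refine h2.congr' ?_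
  filter_upwards [self_mem_nhdsWithin] with x hx
  have hy0 : 0 < 1 - x := sub_pos.2 hx
  have := hy0.ne'
  rw [fhH, show 2 - α = -α + 2 by ring, rpow_add hy0, rpow_two]
  field_simp

lemma fh_I {α : ℝ} (hα : 0 < α) (hα2 : α < 2) :
    IntegrableOn (fun x : ℝ => (1 - x ^ ((α - 1) / 2)) ^ 2 * (1 - x) ^ (-1 - α)) (Ioo 0 1) ∧
    1 / α + ∫ x in Ioo (0:ℝ) 1, (1 - x ^ ((α - 1) / 2)) ^ 2 * (1 - x) ^ (-1 - α) =
      Gamma ((1 + α) / 2) * 2 ^ (-α) * |Gamma (-α / 2)| / √π := by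
  set F : ℝ → ℝ := fun x => (1 - x ^ ((α - 1) / 2)) ^ 2 * (1 - x) ^ (-1 - α) with hF
  obtain ⟨hBi, hB⟩ := fh_beta_integrable (a := (1 + α) / 2) (b := 2 - α) (by linarith) (by linarith)
  set r : ℝ → ℝ := fun x => (x ^ ((1 + α) / 2 - 1) * (1 - x) ^ (2 - α - 1)) with hr
  let ε : ℕ → ℝ := fun n => 1 / ((n:ℝ) + 3)
  have hε0 : ∀ n, 0 < ε n := fun n => by positivity
  have hε1 : ∀ n, ε n < 1 / 2 := fun n => by
    have : (0:ℝ) ≤ n := n.cast_nonneg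
    simp only [ε]; rw [div_lt_div_iff₀ (by linarith) (by norm_num)]; linarith
  have hεt : Tendsto ε atTop (𝓝 0) := by
    have : Tendsto (fun n : ℕ => (n:ℝ) + 3) atTop atTop :=
      tendsto_atTop_add_const_right _ _ tendsto_natCast_atTop_atTop
    exact this.inv_tendsto_atTop.congr fun n => by simp [ε]
  have hcov : AECover (volume.restrict (Ioo (0:ℝ) 1)) atTop (fun n => Ioc (ε n) (1 - ε n)) := by
    refine aecover_Ioo_of_Ioc hεt ?_
    simpa using hεt.const_sub 1
  have hcont : ∀ n, ContinuousOn F (Icc (ε n) (1 - ε n)) := by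
    intro n x hx
    have h1 : x ≠ 0 := ne_of_gt (lt_of_lt_of_le (hε0 n) hx.1)
    have h2 : 1 - x ≠ 0 := ne_of_gt (by linarith [hx.2, hε0 n])
    refine ContinuousAt.continuousWithinAt ?_
    exact ((continuousAt_const.sub (continuousAt_rpow_const x _ (Or.inl h1))).pow 2).mul
      ((continuousAt_const.sub continuousAt_id).rpow_const (Or.inl h2))
  have hsub : ∀ n, Ioc (ε n) (1 - ε n) ⊆ Ioo 0 1 := fun n x hx =>
    ⟨(hε0 n).trans hx.1, by linarith [hx.2, hε0 n]⟩
  have hfi : ∀ n, IntegrableOn F (Ioc (ε n) (1 - ε n)) (volume.restrict (Ioo 0 1)) := by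
    intro n
    exact (((hcont n).integrableOn_Icc).mono_set Ioc_subset_Icc_self).restrict
  have hle : ∀ n, ε n ≤ 1 - ε n := fun n => by linarith [hε1 n]
  have hval : ∀ n, ∫ x in Ioc (ε n) (1 - ε n), F x ∂(volume.restrict (Ioo 0 1)) =
      (fhH α (1 - ε n) - fhH α (ε n)) + (3 - α) / (2 * α) *
        ∫ x in Ioc (ε n) (1 - ε n), r x ∂(volume.restrict (Ioo 0 1)) := by
    intro n
    rw [Measure.restrict_restrict measurableSet_Ioc, inter_eq_left.2 (hsub n)]
    have i1 : IntervalIntegrable F volume (ε n) (1 - ε n) := by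
      apply ContinuousOn.intervalIntegrable
      rw [uIcc_of_le (hle n)]; exact hcont n
    have i2 : IntervalIntegrable r volume (ε n) (1 - ε n) := by
      rw [intervalIntegrable_iff_integrableOn_Ioc_of_le (hle n)]
      exact hBi.mono_set (hsub n)
    have := intervalIntegral.integral_eq_sub_of_hasDerivAt (f := fhH α)
      (f' := fun x => F x - (3 - α) / (2 * α) * r x) (a := ε n) (b := 1 - ε n) (by
        intro x hx
        rw [uIcc_of_le (hle n)] at hx
        exact fhH_deriv hα ⟨lt_of_lt_of_le (hε0 n) hx.1, by linarith [hx.2, hε0 n]⟩)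
      (i1.sub (i2.const_mul _))
    rw [intervalIntegral.integral_sub i1 (i2.const_mul _), intervalIntegral.integral_const_mul,
      intervalIntegral.integral_of_le (hle n), intervalIntegral.integral_of_le (hle n)] at this
    linarith
  have ht : Tendsto (fun n => ∫ x in Ioc (ε n) (1 - ε n), F x ∂(volume.restrict (Ioo 0 1))) atTop
      (𝓝 ((0 - 1 / α) + (3 - α) / (2 * α) * ∫ x in Ioo (0:ℝ) 1, r x)) := by
    simp_rw [hval]
    refine Tendsto.add (Tendsto.sub ?_ ?_) (Tendsto.const_mul _ ?_)
    · refine (fhH_tendsto_one hα hα2).comp (tendsto_nhdsWithin_iff.2 ⟨?_, Eventually.of_forall fun n => ?_⟩)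
      · simpa using hεt.const_sub 1
      · simpa using hε0 n
    · refine (fhH_tendsto_zero hα).comp (tendsto_nhdsWithin_iff.2 ⟨hεt, Eventually.of_forall fun n => ?_⟩)
      simpa using hε0 n
    · exact hcov.integral_tendsto_of_countably_generated hBi
  have hnn : ∀ᵐ x ∂(volume.restrict (Ioo (0:ℝ) 1)), 0 ≤ F x := by
    refine ae_restrict_of_forall_mem measurableSet_Ioo (fun x hx ↦ ?_)
    exact mul_nonneg (sq_nonneg _) (rpow_nonneg (sub_nonneg.2 hx.2.le) _)
  refine ⟨hcov.integrable_of_integral_tendsto_of_nonneg_ae _ hfi hnn ht, ?_⟩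
  rw [hcov.integral_eq_of_tendsto_of_nonneg_ae _ hnn hfi ht, hB]
  have hd := Gamma_mul_Gamma_add_half (1 - α / 2)
  have g1 : Gamma ((1 + α) / 2 + (2 - α)) = (3 - α) / 2 * Gamma ((3 - α) / 2) := by
    rw [← Gamma_add_one (by linarith)]; ring_nf
  have g2 : Gamma (1 - α / 2) = (-α / 2) * Gamma (-α / 2) := by
    rw [← Gamma_add_one (by linarith)]; ring_nf
  have p1 : 0 < Gamma (1 - α / 2) := Gamma_pos_of_pos (by linarith)
  have p2 : 0 < Gamma ((3 - α) / 2) := Gamma_pos_of_pos (by linarith)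
  have hneg : Gamma (-α / 2) < 0 := by
    by_contra h
    push Not at h
    nlinarith
  rw [abs_of_neg hneg, g1]
  rw [show 1 - α / 2 + 1 / 2 = (3 - α) / 2 by ring, show 2 * (1 - α / 2) = 2 - α by ring,
    show 1 - (2 - α) = α - 1 by ring, g2, rpow_sub_one two_ne_zero] at hd
  have h2 : (2:ℝ) ^ (-α) = (2 ^ α)⁻¹ := rpow_neg (by norm_num) _
  have h2p : (0:ℝ) < 2 ^ α := by positivity
  have hsp : 0 < √π := by positivity
  have h3 : 3 - α ≠ 0 := by linarith
  have hG : Gamma (2 - α) = (-α) * Gamma (-α / 2) * Gamma ((3 - α) / 2) / (2 ^ α * √π) := by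
    rw [eq_div_iff (by positivity)]
    generalize Gamma (-α / 2) = Z at hd ⊢
    field_simp at hd
    linarith
  rw [h2, hG]
  field_simp
  ring


section translation
set_option linter.unusedSectionVars false
variable {E : Type*} [NormedAddCommGroup E] [NormedSpace ℝ E] [FiniteDimensional ℝ E]
  [MeasurableSpace E] [BorelSpace E] (μ : Measure E) [μ.IsAddHaarMeasure]

noncomputable def fhN (φ : E → ℝ) (w : E) : ℝ := ∫ x, (φ (x + w) - φ x) ^ 2 ∂μ

lemma fhN_nonneg (φ : E → ℝ) (w : E) : 0 ≤ fhN μ φ w := integral_nonneg fun _ => sq_nonneg _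

lemma fh_cs_add {φ : E → ℝ} (hs : HasCompactSupport φ) (w : E) :
    HasCompactSupport (fun x => φ (x + w)) :=
  hs.comp_homeomorph (Homeomorph.addRight w)

lemma fh_int_mul {φ : E → ℝ} (hc : Continuous φ) (hs : HasCompactSupport φ) (w : E) :
    Integrable (fun x => φ x * φ (x + w)) μ :=
  Continuous.integrable_of_hasCompactSupport (by fun_prop) (hs.mul_right)

lemma fh_int_sq {φ : E → ℝ} (hc : Continuous φ) (hs : HasCompactSupport φ) :
    Integrable (fun x => φ x ^ 2) μ := by
  simpa [sq] using fh_int_mul μ hc hs 0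

lemma fh_int_sq_add {φ : E → ℝ} (hc : Continuous φ) (hs : HasCompactSupport φ) (w : E) :
    Integrable (fun x => φ (x + w) ^ 2) μ :=
  (fh_int_sq μ hc hs).comp_add_right w

lemma fh_expand {φ : E → ℝ} (hc : Continuous φ) (hs : HasCompactSupport φ) (w : E) (a b : ℝ) :
    Integrable (fun x => (a * φ x - b * φ (x + w)) ^ 2) μ ∧
    ∫ x, (a * φ x - b * φ (x + w)) ^ 2 ∂μ =
      (a ^ 2 + b ^ 2) * ∫ x, φ x ^ 2 ∂μ - 2 * a * b * ∫ x, φ x * φ (x + w) ∂μ := by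
  have e : (fun x => (a * φ x - b * φ (x + w)) ^ 2) =
      fun x => (a ^ 2 * φ x ^ 2 + b ^ 2 * φ (x + w) ^ 2) - 2 * a * b * (φ x * φ (x + w)) := by
    ext x; ring
  have i1 := (fh_int_sq μ hc hs).const_mul (a ^ 2)
  have i2 := (fh_int_sq_add μ hc hs w).const_mul (b ^ 2)
  have i3 := (fh_int_mul μ hc hs w).const_mul (2 * a * b)
  have i4 : Integrable (fun x => a ^ 2 * φ x ^ 2 + b ^ 2 * φ (x + w) ^ 2) μ := i1.add i2
  rw [e]
  refine ⟨i4.sub i3, ?_⟩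
  rw [integral_sub i4 i3, integral_add i1 i2, integral_const_mul, integral_const_mul,
    integral_const_mul, integral_add_right_eq_self (fun x => φ x ^ 2)]
  ring

lemma fhN_eq {φ : E → ℝ} (hc : Continuous φ) (hs : HasCompactSupport φ) (w : E) :
    fhN μ φ w = 2 * ∫ x, φ x ^ 2 ∂μ - 2 * ∫ x, φ x * φ (x + w) ∂μ := by
  have := (fh_expand μ hc hs w 1 1).2
  rw [fhN]
  rw [show (fun x => (φ (x + w) - φ x) ^ 2) = fun x => (1 * φ x - 1 * φ (x + w)) ^ 2 by ext; ring,
    this]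
  ring

lemma fh_expand' {φ : E → ℝ} (hc : Continuous φ) (hs : HasCompactSupport φ) (w : E) (a b : ℝ) :
    ∫ x, (a * φ x - b * φ (x + w)) ^ 2 ∂μ = (a - b) ^ 2 * ∫ x, φ x ^ 2 ∂μ + a * b * fhN μ φ w := by
  rw [(fh_expand μ hc hs w a b).2, fhN_eq μ hc hs]
  ring

lemma fhN_le {φ : E → ℝ} (hc : Continuous φ) (hs : HasCompactSupport φ) (w : E) :
    fhN μ φ w ≤ 4 * ∫ x, φ x ^ 2 ∂μ := by
  have h := fh_expand' μ hc hs w 1 (-1)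
  have : 0 ≤ ∫ x, (1 * φ x - (-1) * φ (x + w)) ^ 2 ∂μ := integral_nonneg fun _ => sq_nonneg _
  linarith

lemma fhN_continuous {φ : E → ℝ} (hc : Continuous φ) : Measurable (fhN μ φ) := by
  have : StronglyMeasurable (Function.uncurry fun w x => (φ (x + w) - φ x) ^ 2) :=
    Continuous.stronglyMeasurable (by unfold Function.uncurry; fun_prop)
  exact (this.integral_prod_right (ν := μ)).measurable

lemma fhN_lip {φ : E → ℝ} (hc : ContDiff ℝ (⊤ : ℕ∞) φ) (hs : HasCompactSupport φ) :
    ∃ c, 0 ≤ c ∧ ∀ w, fhN μ φ w ≤ c * ‖w‖ ^ 2 := by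
  obtain ⟨L, hL⟩ := hc.lipschitzWith_of_hasCompactSupport hs (by simp)
  have hcc := hc.continuous
  set B := tsupport φ with hB
  have hBc : IsCompact B := hs
  have hBm : MeasurableSet B := (isClosed_tsupport φ).measurableSet
  have hfin : μ B ≠ ⊤ := hBc.measure_lt_top.ne
  have hi : Integrable (B.indicator (fun _ => (1:ℝ))) μ :=
    (integrable_indicator_iff hBm).2 (integrableOn_const hfin)
  refine ⟨2 * L ^ 2 * ∫ x, B.indicator (fun _ => (1:ℝ)) x ∂μ, ?_, fun w => ?_⟩
  · have : 0 ≤ ∫ x, B.indicator (fun _ => (1:ℝ)) x ∂μ :=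
      integral_nonneg fun x => indicator_nonneg (fun _ _ => zero_le_one) x
    positivity
  · have hle : ∀ x, (φ (x + w) - φ x) ^ 2 ≤ (L ^ 2 * ‖w‖ ^ 2) *
        (B.indicator (fun _ => (1:ℝ)) (x + w) + B.indicator (fun _ => (1:ℝ)) x) := by
      intro x
      have h1 : (φ (x + w) - φ x) ^ 2 ≤ L ^ 2 * ‖w‖ ^ 2 := by
        have := hL.dist_le_mul (x + w) x
        rw [dist_eq_norm, dist_eq_norm, add_sub_cancel_left, Real.norm_eq_abs] at this
        rw [← mul_pow, ← sq_abs]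
        exact pow_le_pow_left₀ (abs_nonneg _) this 2
      have n1 : 0 ≤ B.indicator (fun _ => (1:ℝ)) (x + w) := indicator_nonneg (fun _ _ => zero_le_one) _
      have n2 : 0 ≤ B.indicator (fun _ => (1:ℝ)) x := indicator_nonneg (fun _ _ => zero_le_one) _
      have n3 : 0 ≤ (L:ℝ) ^ 2 * ‖w‖ ^ 2 := by positivity
      by_cases hx : x ∈ B
      · rw [indicator_of_mem hx]; nlinarith
      · by_cases hy : x + w ∈ B
        · rw [indicator_of_mem hy]; nlinarith
        · rw [image_eq_zero_of_notMem_tsupport hx, image_eq_zero_of_notMem_tsupport hy]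
          have := mul_nonneg n3 (add_nonneg n1 n2)
          simpa using this
    have i1 := (hi.comp_add_right w)
    calc fhN μ φ w ≤ ∫ x, (L ^ 2 * ‖w‖ ^ 2) *
        (B.indicator (fun _ => (1:ℝ)) (x + w) + B.indicator (fun _ => (1:ℝ)) x) ∂μ := by
          refine integral_mono ?_ ((i1.add hi).const_mul _) hle
          have := (fh_expand μ hcc hs w (-1) (-1)).1
          refine this.congr (Eventually.of_forall fun x => ?_)
          simp only; ring
      _ = _ := by
        rw [integral_const_mul, integral_add i1 hi,
          integral_add_right_eq_self (fun x => B.indicator (fun _ => (1:ℝ)) x)]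
        ring

lemma fh_scale_sq (φ : E → ℝ) {R : ℝ} (hR : 0 < R) :
    ∫ x, φ (R⁻¹ • x) ^ 2 ∂μ = R ^ (Module.finrank ℝ E) * ∫ x, φ x ^ 2 ∂μ := by
  rw [Measure.integral_comp_inv_smul_of_nonneg μ (fun x => φ x ^ 2) hR.le, smul_eq_mul]

lemma fhN_scale (φ : E → ℝ) {R : ℝ} (hR : 0 < R) (w : E) :
    fhN μ (fun x => φ (R⁻¹ • x)) w = R ^ (Module.finrank ℝ E) * fhN μ φ (R⁻¹ • w) := by
  simp only [fhN, smul_add]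
  rw [Measure.integral_comp_inv_smul_of_nonneg μ (fun x => (φ (x + R⁻¹ • w) - φ x) ^ 2) hR.le, smul_eq_mul]

lemma fh_exists_bump : ∃ φ : E → ℝ, ContDiff ℝ (⊤ : ℕ∞) φ ∧ HasCompactSupport φ ∧
    0 < ∫ x, φ x ^ 2 ∂μ := by
  let b : ContDiffBump (0 : E) := ⟨1, 2, by norm_num, by norm_num⟩
  refine ⟨b, b.contDiff, b.hasCompactSupport, ?_⟩
  have hc : Continuous (fun x => b x ^ 2) := b.continuous.pow 2
  refine hc.integral_pos_of_hasCompactSupport_nonneg_nonzero ?_ (fun x => sq_nonneg _) (x := 0) ?_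
  · have := b.hasCompactSupport.mul_right (f' := fun x => b x)
    rw [show (fun x => b x ^ 2) = (b * fun x => b x) by ext x; simp [sq]]
    exact this
  · have : b 0 = 1 := b.one_of_mem_closedBall (by simp [b])
    simp [this]

end translation


noncomputable def fhF (α : ℝ) (g : ℝ → ℝ) (s : ℝ) : ℝ :=
  if 0 < s then s ^ ((α - 1) / 2) * g (log s) else 0

lemma fhF_smooth (α : ℝ) {g : ℝ → ℝ} (hg : ContDiff ℝ (⊤ : ℕ∞) g) (hs : HasCompactSupport g) :
    ContDiff ℝ (⊤ : ℕ∞) (fhF α g) ∧ HasCompactSupport (fhF α g) ∧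
      tsupport (fhF α g) ⊆ Ioi 0 := by
  obtain ⟨A, hA⟩ := hs.isCompact.isBounded.subset_closedBall 0
  have hz : ∀ a, a ∉ Icc (-A) A → g a = 0 := by
    intro a ha
    apply image_eq_zero_of_notMem_tsupport
    intro h
    have := hA h
    rw [Real.closedBall_eq_Icc] at this
    exact ha (by simpa using this)
  have hz2 : ∀ s, s ∉ Icc (exp (-A)) (exp A) → fhF α g s = 0 := by
    intro s h
    unfold fhF
    split_ifs with h0
    · rw [hz, mul_zero]
      intro h1
      exact h ⟨(le_log_iff_exp_le h0).1 h1.1, (log_le_iff_le_exp h0).1 h1.2⟩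
    · rfl
  have hsub : tsupport (fhF α g) ⊆ Icc (exp (-A)) (exp A) := by
    apply closure_minimal _ isClosed_Icc
    intro s hs'
    by_contra h
    exact hs' (hz2 s h)
  have hsub2 : tsupport (fhF α g) ⊆ Ioi 0 := fun s h => lt_of_lt_of_le (exp_pos _) (hsub h).1
  refine ⟨?_, HasCompactSupport.intro isCompact_Icc (fun x hx => hz2 x hx), hsub2⟩
  rw [contDiff_iff_contDiffAt]
  intro s
  by_cases h0 : 0 < s
  · have h1 : ContDiffAt ℝ (⊤ : ℕ∞) (fun s => s ^ ((α - 1) / 2) * g (log s)) s :=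
      (contDiffAt_rpow_const_of_ne h0.ne').mul
        (hg.contDiffAt.comp s (contDiffAt_log.2 h0.ne'))
    refine h1.congr_of_eventuallyEq ?_
    filter_upwards [Ioi_mem_nhds h0] with x hx
    exact if_pos hx
  · have : s ∉ tsupport (fhF α g) := fun h => h0 (hsub2 h)
    rw [notMem_tsupport_iff_eventuallyEq] at this
    exact (contDiffAt_const (c := (0:ℝ))).congr_of_eventuallyEq this

lemma fh_image_exp : exp '' univ = Ioi 0 := by rw [image_univ, range_exp]

lemma fhF_exp (α : ℝ) (g : ℝ → ℝ) (a : ℝ) : fhF α g (exp a) = exp ((α - 1) / 2 * a) * g a := by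
  rw [fhF, if_pos (exp_pos a), log_exp, ← exp_mul, mul_comm a]

lemma fhF_weight (α : ℝ) (g : ℝ → ℝ) :
    ∫ s in Ioi 0, fhF α g s ^ 2 * s ^ (-α) = ∫ a, g a ^ 2 := by
  rw [← fh_image_exp, integral_image_eq_integral_abs_deriv_smul MeasurableSet.univ
    (fun x _ => (hasDerivAt_exp x).hasDerivWithinAt) exp_injective.injOn]
  rw [setIntegral_univ]
  congr 1
  ext a
  rw [abs_of_pos (exp_pos a), smul_eq_mul, fhF_exp, ← exp_mul, mul_pow, ← exp_nat_mul]
  have : exp a * (exp ((2:ℕ) * ((α - 1) / 2 * a)) * g a ^ 2 * exp (a * -α)) =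
    exp (a + (2:ℕ) * ((α - 1) / 2 * a) + (a * -α)) * g a ^ 2 := by
    rw [exp_add, exp_add]; ring
  rw [this]
  have : a + (2:ℕ) * ((α - 1) / 2 * a) + (a * -α) = 0 := by push_cast; ring
  rw [this]; simp

lemma fh_lint_exp (Ψ : ℝ → ENNReal) :
    ∫⁻ s in Ioi 0, Ψ s = ∫⁻ a, ENNReal.ofReal (exp a) * Ψ (exp a) := by
  rw [← fh_image_exp, lintegral_image_eq_lintegral_abs_deriv_mul MeasurableSet.univ
    (fun x _ => (hasDerivAt_exp x).hasDerivWithinAt) exp_injective.injOn]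
  rw [setLIntegral_univ]
  simp_rw [abs_of_pos (exp_pos _)]

lemma fh_lint_scale (Ψ : ℝ → ENNReal) {s : ℝ} (hs : 0 < s) :
    ∫⁻ h in Ioi 0, Ψ h = ∫⁻ k in Ioi 0, ENNReal.ofReal s * Ψ (s * k) := by
  have him : (fun k => s * k) '' Ioi 0 = Ioi 0 := by
    ext x; constructor
    · rintro ⟨k, hk, rfl⟩; exact mul_pos hs hk
    · intro hx; exact ⟨x / s, div_pos hx hs, by field_simp⟩
  conv_lhs => rw [← him]
  rw [lintegral_image_eq_lintegral_abs_deriv_mul measurableSet_Ioi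
    (fun x _ => by simpa using ((hasDerivAt_id x).const_mul s).hasDerivWithinAt)
    (fun x _ y _ h => mul_left_cancel₀ hs.ne' h)]
  simp_rw [abs_of_pos hs]

lemma fh_lint_refl (Ψ : ℝ → ENNReal) :
    ∫⁻ k in Ioo 0 1, Ψ k = ∫⁻ r in Ioo 0 1, Ψ (1 - r) := by
  have him : (fun k : ℝ => 1 - k) '' Ioo 0 1 = Ioo 0 1 := by
    simp
  conv_lhs => rw [← him]
  rw [lintegral_image_eq_lintegral_abs_deriv_mul (f := fun k : ℝ => 1 - k) (f' := fun _ => -1)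
    measurableSet_Ioo (fun x _ => ((hasDerivAt_id x).const_sub 1).hasDerivWithinAt)
    (fun x _ y _ h => by simpa using h)]
  simp

lemma fh_lint_even (Ψ : ℝ → ENNReal) (he : ∀ x, Ψ (-x) = Ψ x) :
    ∫⁻ h, Ψ h = 2 * ∫⁻ h in Ioi 0, Ψ h := by
  rw [← lintegral_add_compl Ψ (measurableSet_Ioi (a := (0:ℝ))), compl_Ioi, two_mul]
  congr 1
  rw [setLIntegral_congr (Iio_ae_eq_Iic (a := (0:ℝ))).symm]
  have him : (fun k : ℝ => - k) '' Ioi 0 = Iio 0 := by simp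
  rw [← him, lintegral_image_eq_lintegral_abs_deriv_mul measurableSet_Ioi
    (fun x _ => (hasDerivAt_neg x).hasDerivWithinAt)
    (fun x _ y _ h => by simpa using h)]
  simp [he]

lemma fhN_even (φ : ℝ → ℝ) (w : ℝ) : fhN volume φ (-w) = fhN volume φ w := by
  unfold fhN
  rw [← integral_add_right_eq_self _ w]
  congr 1; ext x
  rw [add_neg_cancel_right, ← neg_sub, neg_sq]

lemma fh_log_bound {r : ℝ} (hr : r ∈ Ioo (0:ℝ) 1) :
    (log r) ^ 2 ≤ 16 * (r ^ (-(1:ℝ)/2) * (1 - r) ^ 2) := by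
  have h0 := hr.1
  set t := r ^ ((1:ℝ)/4) with ht
  have ht0 : 0 < t := rpow_pos_of_pos h0 _
  have hlog : log r = 4 * log t := by rw [ht, log_rpow h0]; ring
  have ht1 : t ≤ 1 := rpow_le_one h0.le hr.2.le (by norm_num)
  have htr : r ≤ t := by
    have := rpow_le_rpow_of_exponent_ge h0 hr.2.le (by norm_num : (1:ℝ)/4 ≤ 1)
    rwa [rpow_one] at this
  have h1 : -log t ≤ t⁻¹ - 1 := by
    have := log_le_sub_one_of_pos (inv_pos.2 ht0)
    rwa [log_inv] at this
  have h2 : 0 ≤ -log t := by linarith [log_nonpos ht0.le ht1]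
  have h3 : t⁻¹ - 1 ≤ t⁻¹ * (1 - r) := by
    have : t⁻¹ * r ≤ 1 := by
      rw [inv_mul_le_iff₀ ht0]; linarith
    nlinarith
  have h4 : (-log t) ^ 2 ≤ (t⁻¹ * (1 - r)) ^ 2 := pow_le_pow_left₀ h2 (h1.trans h3) 2
  have h5 : r ^ (-(1:ℝ)/2) = (t⁻¹) ^ 2 := by
    rw [ht, ← rpow_neg h0.le, ← rpow_natCast, ← rpow_mul h0.le]; norm_num
  rw [hlog, h5, ← mul_pow]
  nlinarith


lemma fh_step1 {α : ℝ} {f : ℝ → ℝ} (hc : Continuous f) (hs : HasCompactSupport f)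
    (h0 : ∀ s ≤ 0, f s = 0) {h : ℝ} (hh : 0 < h) :
    ENNReal.ofReal (|h| ^ (-1 - α) * fhN volume f h) =
      ∫⁻ s in Ioi 0, ENNReal.ofReal (h ^ (-1 - α) * (f s - f (s - h)) ^ 2) := by
  have hi := (fh_expand volume hc hs (-h) 1 1).1
  have hN : fhN volume f h = ∫ s, (f s - f (s - h)) ^ 2 := by
    rw [← fhN_even, fhN]
    congr 1; ext s; rw [← sub_eq_add_neg, ← neg_sub, neg_sq]
  have hi' : Integrable (fun s => h ^ (-1 - α) * (f s - f (s - h)) ^ 2) := by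
    refine (hi.const_mul (h ^ (-1 - α))).congr (Eventually.of_forall fun s => ?_)
    simp only [one_mul, ← sub_eq_add_neg]
  rw [abs_of_pos hh, hN, ← integral_const_mul, ofReal_integral_eq_lintegral_ofReal hi'
    (Eventually.of_forall fun s => mul_nonneg (rpow_nonneg hh.le _) (sq_nonneg _)),
    ← lintegral_indicator measurableSet_Ioi]
  congr 1; ext s
  by_cases hs0 : 0 < s
  · rw [indicator_of_mem (by exact hs0)]
  · rw [indicator_of_notMem (by exact hs0), h0 s (not_lt.1 hs0), h0 (s - h) (by linarith)]
    simp

lemma fh_step2 {α : ℝ} {f : ℝ → ℝ} (hc : Continuous f) (hs : HasCompactSupport f)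
    (h0 : ∀ s ≤ 0, f s = 0) :
    ∫⁻ h in Ioi 0, ENNReal.ofReal (|h| ^ (-1 - α) * fhN volume f h) =
      ∫⁻ k in Ioi 0, ∫⁻ s in Ioi 0,
        ENNReal.ofReal (k ^ (-1 - α) * (s ^ (-α) * (f s - f (s * (1 - k))) ^ 2)) := by
  have hm := hc.measurable
  rw [setLIntegral_congr_fun measurableSet_Ioi (fun h hh => fh_step1 (α := α) hc hs h0 hh)]
  rw [lintegral_lintegral_swap (by fun_prop)]
  conv_rhs => rw [lintegral_lintegral_swap (by fun_prop)]
  refine setLIntegral_congr_fun measurableSet_Ioi fun s hs => ?_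
  have hs0 : 0 < s := hs
  rw [fh_lint_scale _ hs0]
  refine setLIntegral_congr_fun measurableSet_Ioi fun k hk => ?_
  have hk0 : 0 < k := hk
  rw [← ENNReal.ofReal_mul hs0.le, mul_rpow hs0.le hk0.le, show s - s * k = s * (1 - k) by ring,
    show -1 - α = -α - 1 by ring, rpow_sub_one hs0.ne']
  congr 1
  field_simp

lemma fh_step3_ge {α : ℝ} {g : ℝ → ℝ} (hc : Continuous g) (hs : HasCompactSupport g)
    {k : ℝ} (hk : 1 ≤ k) :
    ∫⁻ s in Ioi 0, ENNReal.ofReal (k ^ (-1 - α) * (s ^ (-α) *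
      (fhF α g s - fhF α g (s * (1 - k))) ^ 2)) =
    ENNReal.ofReal (k ^ (-1 - α) * ∫ a, g a ^ 2) := by
  have hk0 : 0 ≤ k ^ (-1 - α) := rpow_nonneg (by linarith) _
  rw [fh_lint_exp, ← integral_const_mul, ofReal_integral_eq_lintegral_ofReal
    ((fh_int_sq volume hc hs).const_mul _) (Eventually.of_forall fun s => mul_nonneg hk0 (sq_nonneg _))]
  congr 1; ext a
  have : fhF α g (exp a * (1 - k)) = 0 := by
    rw [fhF, if_neg]; push Not
    exact mul_nonpos_of_nonneg_of_nonpos (exp_pos a).le (by linarith)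
  rw [← ENNReal.ofReal_mul (exp_pos a).le, this, fhF_exp, ← exp_mul, sub_zero, mul_pow,
    ← exp_nat_mul]
  congr 1
  have : exp a * (k ^ (-1 - α) * (exp (a * -α) * (exp ((2:ℕ) * ((α - 1) / 2 * a)) * g a ^ 2))) =
    exp (a + (2:ℕ) * ((α - 1) / 2 * a) + (a * -α)) * (k ^ (-1 - α) * g a ^ 2) := by
    rw [exp_add, exp_add]; ring
  rw [this]
  have : a + (2:ℕ) * ((α - 1) / 2 * a) + (a * -α) = 0 := by push_cast; ring
  rw [this]; simp

lemma fh_step3_lt {α : ℝ} {g : ℝ → ℝ} (hc : Continuous g) (hs : HasCompactSupport g)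
    {r : ℝ} (hr : r ∈ Ioo (0:ℝ) 1) :
    ∫⁻ s in Ioi 0, ENNReal.ofReal ((1 - r) ^ (-1 - α) * (s ^ (-α) *
      (fhF α g s - fhF α g (s * (1 - (1 - r)))) ^ 2)) =
    ENNReal.ofReal ((1 - r) ^ (-1 - α) * ((1 - r ^ ((α - 1) / 2)) ^ 2 * (∫ a, g a ^ 2)
      + r ^ ((α - 1) / 2) * fhN volume g (log r))) := by
  have hk0 : 0 ≤ (1 - r) ^ (-1 - α) := rpow_nonneg (by linarith [hr.2]) _
  have h1 := fh_expand' volume hc hs (log r) 1 (r ^ ((α - 1) / 2))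
  have h2 := (fh_expand volume hc hs (log r) 1 (r ^ ((α - 1) / 2))).1
  rw [one_mul (r ^ ((α - 1) / 2))] at h1
  rw [← h1]
  rw [fh_lint_exp, ← integral_const_mul, ofReal_integral_eq_lintegral_ofReal
    (h2.const_mul _) (Eventually.of_forall fun s => mul_nonneg hk0 (sq_nonneg _))]
  congr 1; ext a
  have : exp a * (1 - (1 - r)) = exp (a + log r) := by rw [exp_add, exp_log hr.1]; ring
  rw [← ENNReal.ofReal_mul (exp_pos a).le, this, fhF_exp, fhF_exp, ← exp_mul, mul_add, exp_add,
    rpow_def_of_pos hr.1 ((α - 1) / 2), mul_comm (log r)]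
  congr 1
  have : ∀ A X Y Z : ℝ, exp a * (A * (exp (a * -α) * (exp ((α - 1) / 2 * a) * X -
      exp ((α - 1) / 2 * a) * Y * Z) ^ 2)) =
      exp (a + ((α - 1) / 2 * a) + ((α - 1) / 2 * a) + (a * -α)) * (A * (1 * X - Y * Z) ^ 2) := by
    intro A X Y Z
    rw [exp_add, exp_add, exp_add]; ring
  rw [this]
  have : a + ((α - 1) / 2 * a) + ((α - 1) / 2 * a) + (a * -α) = 0 := by ring
  rw [this]; simp

lemma fh_split (T : ℝ → ENNReal) :
    ∫⁻ k in Ioi 0, T k = (∫⁻ k in Ioo 0 1, T k) + ∫⁻ k in Ici 1, T k := by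
  rw [← Ioo_union_Ici_eq_Ioi zero_lt_one]
  rw [lintegral_union measurableSet_Ici (by
    rw [disjoint_left]; rintro x hx hx2; exact absurd hx.2 (not_lt.2 hx2))]

lemma fh_energy {α : ℝ} (hα : 0 < α) (hα2 : α < 2) {g : ℝ → ℝ} (hg : ContDiff ℝ (⊤ : ℕ∞) g)
    (hs : HasCompactSupport g) {c : ℝ} (hc : 0 ≤ c) (hN : ∀ w, fhN volume g w ≤ c * ‖w‖ ^ 2) :
    ∫⁻ h, ENNReal.ofReal (|h| ^ (-1 - α) * fhN volume (fhF α g) h) ≤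
      2 * ENNReal.ofReal (Gamma ((1 + α) / 2) * 2 ^ (-α) * |Gamma (-α / 2)| / √π * (∫ a, g a ^ 2)
        + 16 * c * (Gamma (α / 2) * Gamma (2 - α) / Gamma (α / 2 + (2 - α)))) := by
  obtain ⟨f1, f2, f3⟩ := fhF_smooth α hg hs
  have hg0 : 0 ≤ ∫ a, g a ^ 2 := integral_nonneg fun _ => sq_nonneg _
  rw [fh_lint_even _ (fun x => by rw [abs_neg, fhN_even])]
  gcongr
  rw [fh_step2 f1.continuous f2 (fun s hs => if_neg (not_lt.2 hs))]
  obtain ⟨hI1, hI2⟩ := fh_I hα hα2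
  obtain ⟨hB1, hB2⟩ := fh_beta_integrable (a := α / 2) (b := 2 - α) (by linarith) (by linarith)
  rw [← hI2, ← hB2, fh_split]
  rw [setLIntegral_congr_fun measurableSet_Ici (fun k hk => fh_step3_ge (α := α) hg.continuous hs hk)]
  rw [fh_lint_refl]
  rw [setLIntegral_congr_fun measurableSet_Ioo (fun r hr => fh_step3_lt (α := α) hg.continuous hs hr)]
  have hge : ∫⁻ k in Ici 1, ENNReal.ofReal (k ^ (-1 - α) * ∫ a, g a ^ 2) =
      ENNReal.ofReal (1 / α * ∫ a, g a ^ 2) := by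
    rw [setLIntegral_congr Ioi_ae_eq_Ici.symm, ← ofReal_integral_eq_lintegral_ofReal]
    · rw [integral_mul_const, integral_Ioi_rpow_of_lt (by linarith) one_pos, one_rpow]
      congr 2
      rw [show -1 - α + 1 = -α by ring, neg_div_neg_eq]
    · exact (integrableOn_Ioi_rpow_of_lt (by linarith) one_pos).mul_const _
    · refine ae_restrict_of_forall_mem measurableSet_Ioi fun k hk => ?_
      exact mul_nonneg (rpow_nonneg (zero_le_one.trans (le_of_lt hk)) _) hg0
  rw [hge]
  have hlt : ∫⁻ r in Ioo (0:ℝ) 1, ENNReal.ofReal ((1 - r) ^ (-1 - α) *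
      ((1 - r ^ ((α - 1) / 2)) ^ 2 * (∫ a, g a ^ 2) + r ^ ((α - 1) / 2) * fhN volume g (log r))) ≤
      ∫⁻ r in Ioo (0:ℝ) 1, ENNReal.ofReal
        ((1 - r ^ ((α - 1) / 2)) ^ 2 * (1 - r) ^ (-1 - α) * (∫ a, g a ^ 2) +
          16 * c * (r ^ (α / 2 - 1) * (1 - r) ^ (2 - α - 1))) := by
    refine setLIntegral_mono' measurableSet_Ioo fun r hr => ENNReal.ofReal_le_ofReal ?_
    have hy : 0 < 1 - r := sub_pos.2 hr.2
    have h1 : fhN volume g (log r) ≤ c * (16 * (r ^ (-(1:ℝ)/2) * (1 - r) ^ 2)) := by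
      refine (hN _).trans (mul_le_mul_of_nonneg_left ?_ hc)
      rw [Real.norm_eq_abs, sq_abs]
      exact fh_log_bound hr
    have h2 : r ^ (α / 2 - 1) = r ^ ((α - 1) / 2) * r ^ (-(1:ℝ)/2) := by
      rw [← rpow_add hr.1]; ring_nf
    have h3 : (1 - r) ^ (2 - α - 1) = (1 - r) ^ (-1 - α) * (1 - r) ^ 2 := by
      rw [← rpow_two, ← rpow_add hy]; ring_nf
    rw [h2, h3]
    have p1 : 0 < r ^ ((α - 1) / 2) := rpow_pos_of_pos hr.1 _
    have p2 : 0 < (1 - r) ^ (-1 - α) := rpow_pos_of_pos hy _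
    have := mul_le_mul_of_nonneg_left h1 (mul_pos p1 p2).le
    linarith
  have hint := (hI1.mul_const (∫ a, g a ^ 2)).add (hB1.const_mul (16 * c))
  have hlt2 : ∫⁻ r in Ioo (0:ℝ) 1, ENNReal.ofReal
        ((1 - r ^ ((α - 1) / 2)) ^ 2 * (1 - r) ^ (-1 - α) * (∫ a, g a ^ 2) +
          16 * c * (r ^ (α / 2 - 1) * (1 - r) ^ (2 - α - 1))) =
     ENNReal.ofReal ((∫ r in Ioo (0:ℝ) 1, (1 - r ^ ((α - 1) / 2)) ^ 2 * (1 - r) ^ (-1 - α)) *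
      (∫ a, g a ^ 2) + 16 * c * ∫ r in Ioo (0:ℝ) 1, r ^ (α / 2 - 1) * (1 - r) ^ (2 - α - 1)) := by
    rw [← integral_mul_const, ← integral_const_mul, ← integral_add (hI1.mul_const _) (hB1.const_mul _)]
    refine (ofReal_integral_eq_lintegral_ofReal hint ?_).symm
    refine ae_restrict_of_forall_mem measurableSet_Ioo fun r hr => ?_
    have p1 := rpow_nonneg (sub_nonneg.2 hr.2.le) (-1 - α)
    have p2 := rpow_nonneg (sub_nonneg.2 hr.2.le) (2 - α - 1)
    have p3 := rpow_nonneg hr.1.le (α / 2 - 1)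
    simp only [Pi.zero_apply, Pi.add_apply]
    positivity
  refine (add_le_add_left (hlt.trans hlt2.le) _).trans ?_
  have n1 : 0 ≤ ∫ r in Ioo (0:ℝ) 1, (1 - r ^ ((α - 1) / 2)) ^ 2 * (1 - r) ^ (-1 - α) :=
    setIntegral_nonneg measurableSet_Ioo fun r hr =>
      mul_nonneg (sq_nonneg _) (rpow_nonneg (sub_nonneg.2 hr.2.le) _)
  have n2 : 0 ≤ ∫ r in Ioo (0:ℝ) 1, r ^ (α / 2 - 1) * (1 - r) ^ (2 - α - 1) :=
    setIntegral_nonneg measurableSet_Ioo fun r hr =>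
      mul_nonneg (rpow_nonneg hr.1.le _) (rpow_nonneg (sub_nonneg.2 hr.2.le) _)
  rw [← ENNReal.ofReal_add (by positivity) (by positivity)]
  apply le_of_eq
  congr 1
  ring

theorem fh_oneD {α : ℝ} (hα : 0 < α) (hα2 : α < 2) {ε : ℝ} (hε : 0 < ε) :
    ∃ f : ℝ → ℝ, ContDiff ℝ (⊤ : ℕ∞) f ∧ HasCompactSupport f ∧ tsupport f ⊆ Ioi 0 ∧
      0 < ∫ s in Ioi 0, f s ^ 2 * s ^ (-α) ∧
      ∫⁻ h, ENNReal.ofReal (|h| ^ (-1 - α) * fhN volume f h) ≤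
        ENNReal.ofReal (2 * (Gamma ((1 + α) / 2) * 2 ^ (-α) * |Gamma (-α / 2)| / √π + ε) *
          ∫ s in Ioi 0, f s ^ 2 * s ^ (-α)) := by
  obtain ⟨G, hG1, hG2, hG3⟩ := fh_exists_bump (E := ℝ) volume
  obtain ⟨c, hc, hN⟩ := fhN_lip volume hG1 hG2
  set B := Gamma (α / 2) * Gamma (2 - α) / Gamma (α / 2 + (2 - α)) with hB
  have hBp : 0 < B := div_pos (mul_pos (Gamma_pos_of_pos (by linarith)) (Gamma_pos_of_pos (by linarith)))
    (Gamma_pos_of_pos (by linarith))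
  set V := ∫ x, G x ^ 2 with hV
  set R : ℝ := 1 + 16 * c * B / (ε * V) with hR
  have hR1 : 1 ≤ R := by
    have : 0 ≤ 16 * c * B / (ε * V) := by positivity
    linarith
  have hR0 : 0 < R := by linarith
  have hRV : 16 * c * B ≤ ε * V * R := by
    rw [hR, mul_add, mul_div_cancel₀ _ (by positivity)]
    nlinarith [mul_pos hε hG3]
  set g : ℝ → ℝ := fun x => G (R⁻¹ • x) with hg
  have g1 : ContDiff ℝ (⊤ : ℕ∞) g := hG1.comp (contDiff_const_smul R⁻¹)
  have g2 : HasCompactSupport g := hG2.comp_smul (inv_ne_zero hR0.ne')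
  have g3 : ∫ x, g x ^ 2 = R * V := by
    rw [hg, fh_scale_sq volume G hR0]; simp [hV]
  have g4 : ∀ w, fhN volume g w ≤ (c / R) * ‖w‖ ^ 2 := by
    intro w
    rw [hg, fhN_scale volume G hR0, Module.finrank_self, pow_one]
    have := mul_le_mul_of_nonneg_left (hN (R⁻¹ • w)) hR0.le
    refine this.trans (le_of_eq ?_)
    rw [norm_smul, norm_inv, Real.norm_eq_abs R, abs_of_pos hR0]
    field_simp
  obtain ⟨f1, f2, f3⟩ := fhF_smooth α g1 g2
  refine ⟨fhF α g, f1, f2, f3, ?_, ?_⟩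
  · rw [fhF_weight, g3]; positivity
  · refine (fh_energy hα hα2 g1 g2 (by positivity : 0 ≤ c / R) g4).trans ?_
    rw [fhF_weight, g3, ← hB, show (2:ENNReal) = ENNReal.ofReal 2 by simp,
      ← ENNReal.ofReal_mul (by norm_num)]
    apply ENNReal.ofReal_le_ofReal
    have : 16 * (c / R) * B ≤ ε * (R * V) := by
      have : 16 * (c / R) * B = 16 * c * B / R := by ring
      rw [this, div_le_iff₀ hR0]
      have h5 : ε * V * R ≤ ε * (R * V) * R := by
        have : 0 < ε * V * R := by positivity
        nlinarith
      linarith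
    nlinarith


noncomputable def fhE (d : ℕ) : EuclideanSpace ℝ (Fin (d + 1)) ≃ᵐ EuclideanSpace ℝ (Fin d) × ℝ :=
  (MeasurableEquiv.toLp 2 (Fin (d + 1) → ℝ)).symm.trans
    ((MeasurableEquiv.piFinSuccAbove (fun _ => ℝ) (Fin.last d)).trans
      (MeasurableEquiv.prodComm.trans
        ((MeasurableEquiv.toLp 2 (Fin d → ℝ)).prodCongr (MeasurableEquiv.refl ℝ))))

lemma fhE_snd (d : ℕ) (x : EuclideanSpace ℝ (Fin (d + 1))) : (fhE d x).2 = x (Fin.last d) := rfl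

lemma fhE_fst (d : ℕ) (x : EuclideanSpace ℝ (Fin (d + 1))) (i : Fin d) :
    (fhE d x).1 i = x i.castSucc := by
  have : (fhE d x).1 i = x ((Fin.last d).succAbove i) := rfl
  rw [this, Fin.succAbove_last]

lemma fhE_add (d : ℕ) (x y : EuclideanSpace ℝ (Fin (d + 1))) :
    fhE d (x + y) = fhE d x + fhE d y := rfl

lemma fhE_norm (d : ℕ) (x : EuclideanSpace ℝ (Fin (d + 1))) :
    ‖x‖ ^ 2 = ‖(fhE d x).1‖ ^ 2 + (fhE d x).2 ^ 2 := by
  rw [EuclideanSpace.norm_sq_eq, EuclideanSpace.norm_sq_eq, Fin.sum_univ_castSucc]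
  simp only [fhE_fst, fhE_snd, Real.norm_eq_abs, sq_abs]

lemma fhE_mp (d : ℕ) : MeasurePreserving (fhE d) volume volume := by
  refine (EuclideanSpace.volume_preserving_symm_measurableEquiv_toLp (Fin (d + 1))).trans ?_
  refine (volume_preserving_piFinSuccAbove (fun _ => ℝ) (Fin.last d)).trans ?_
  refine (Measure.measurePreserving_swap).trans ?_
  exact ((EuclideanSpace.volume_preserving_symm_measurableEquiv_toLp (Fin d)).symm).prod
    (MeasurePreserving.id volume)

lemma fhE_contDiff (d : ℕ) : ContDiff ℝ (⊤ : ℕ∞) (fhE d) := by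
  refine ContDiff.prodMk (f := fun x => (fhE d x).1) (g := fun x => (fhE d x).2) ?_ ?_
  · rw [contDiff_euclidean]
    intro i
    simp only [fhE_fst]
    fun_prop
  · simp only [fhE_snd]
    fun_prop

lemma fh_gamma_lint {P r : ℝ} (hP : 0 < P) (hr : 0 < r) :
    ∫⁻ t in Ioi 0, ENNReal.ofReal (t ^ (P - 1) * exp (-(r * t))) =
      ENNReal.ofReal (r ^ (-P) * Gamma P) := by
  have h := integral_rpow_mul_exp_neg_mul_Ioi hP hr
  have hpos : 0 < (1 / r) ^ P * Gamma P := mul_pos (by positivity) (Gamma_pos_of_pos hP)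
  have hi : Integrable (fun t : ℝ => t ^ (P - 1) * exp (-(r * t))) (volume.restrict (Ioi 0)) := by
    by_contra hn
    rw [integral_undef hn] at h
    linarith
  rw [← ofReal_integral_eq_lintegral_ofReal hi, h]
  · rw [one_div, inv_rpow hr.le, rpow_neg hr.le]
  · refine ae_restrict_of_forall_mem measurableSet_Ioi fun t ht => ?_
    exact mul_nonneg (rpow_nonneg (le_of_lt ht) _) (exp_pos _).le

lemma fh_fiber (d : ℕ) {P a : ℝ} (hP : (d:ℝ) / 2 < P) (ha : 0 < a) :
    ∫⁻ v : EuclideanSpace ℝ (Fin d), ENNReal.ofReal ((‖v‖ ^ 2 + a) ^ (-P)) =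
      ENNReal.ofReal (π ^ ((d:ℝ) / 2) * Gamma (P - d / 2) / Gamma P * a ^ (-(P - d / 2))) := by
  have hP0 : 0 < P := lt_of_le_of_lt (by positivity) hP
  have hG := Gamma_pos_of_pos hP0
  have h1 : ∀ v : EuclideanSpace ℝ (Fin d), ENNReal.ofReal ((‖v‖ ^ 2 + a) ^ (-P)) =
      ENNReal.ofReal (1 / Gamma P) *
        ∫⁻ t in Ioi 0, ENNReal.ofReal (t ^ (P - 1) * exp (-((‖v‖ ^ 2 + a) * t))) := by
    intro v
    rw [fh_gamma_lint hP0 (by positivity), ← ENNReal.ofReal_mul (by positivity)]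
    congr 1
    field_simp
  simp_rw [h1]
  rw [lintegral_const_mul' _ _ ENNReal.ofReal_ne_top, lintegral_lintegral_swap (by fun_prop)]
  have h2 : ∀ t ∈ Ioi (0:ℝ), ∫⁻ v : EuclideanSpace ℝ (Fin d),
      ENNReal.ofReal (t ^ (P - 1) * exp (-((‖v‖ ^ 2 + a) * t))) =
      ENNReal.ofReal (π ^ ((d:ℝ) / 2)) * ENNReal.ofReal (t ^ (P - d / 2 - 1) * exp (-(a * t))) := by
    intro t ht
    have ht0 : 0 < t := ht
    have hg := GaussianFourier.integral_rexp_neg_mul_sq_norm (V := EuclideanSpace ℝ (Fin d)) ht0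
    have hi : Integrable (fun v : EuclideanSpace ℝ (Fin d) => exp (-t * ‖v‖ ^ 2)) := by
      by_contra hn
      rw [integral_undef hn] at hg
      have : 0 < (π / t) ^ ((Module.finrank ℝ (EuclideanSpace ℝ (Fin d)) : ℝ) / 2) := by positivity
      linarith
    have he : ∀ v : EuclideanSpace ℝ (Fin d), t ^ (P - 1) * exp (-((‖v‖ ^ 2 + a) * t)) =
      (t ^ (P - 1) * exp (-(a * t))) * exp (-t * ‖v‖ ^ 2) := by
      intro v
      rw [mul_assoc, ← exp_add]; ring_nf
    simp_rw [he]
    rw [← ofReal_integral_eq_lintegral_ofReal (hi.const_mul _)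
      (Eventually.of_forall fun v => by positivity), integral_const_mul, hg,
      ← ENNReal.ofReal_mul (by positivity), finrank_euclideanSpace_fin, div_rpow pi_pos.le ht0.le,
      show P - d / 2 - 1 = (P - 1) - d / 2 by ring, rpow_sub ht0 (P - 1) ((d:ℝ) / 2)]
    congr 1
    field_simp
  rw [setLIntegral_congr_fun measurableSet_Ioi h2, lintegral_const_mul' _ _ ENNReal.ofReal_ne_top,
    fh_gamma_lint (by linarith) ha, ← ENNReal.ofReal_mul (by positivity),
    ← ENNReal.ofReal_mul (by positivity)]
  congr 1
  field_simp

lemma fh_norm_rpow (d : ℕ) (q : ℝ) (z : EuclideanSpace ℝ (Fin (d + 1))) :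
    ‖z‖ ^ (-q) = (‖(fhE d z).1‖ ^ 2 + (fhE d z).2 ^ 2) ^ (-(q / 2)) := by
  rw [← fhE_norm, ← rpow_two, ← rpow_mul (norm_nonneg _)]
  congr 1; ring

lemma fh_project (d : ℕ) {α : ℝ} (hα : 0 < α) {M : ℝ → ℝ} (hM : Measurable M) :
    ∫⁻ z : EuclideanSpace ℝ (Fin (d + 1)),
      ENNReal.ofReal (‖z‖ ^ (-((d:ℝ) + 1 + α)) * M (fhE d z).2) =
    ENNReal.ofReal (π ^ ((d:ℝ) / 2) * Gamma ((1 + α) / 2) / Gamma (((d:ℝ) + 1 + α) / 2)) *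
      ∫⁻ h, ENNReal.ofReal (|h| ^ (-1 - α) * M h) := by
  have hC : 0 < π ^ ((d:ℝ) / 2) * Gamma ((1 + α) / 2) / Gamma (((d:ℝ) + 1 + α) / 2) :=
    div_pos (mul_pos (by positivity) (Gamma_pos_of_pos (by positivity)))
      (Gamma_pos_of_pos (by positivity))
  simp_rw [fh_norm_rpow]
  rw [(fhE_mp d).lintegral_comp (f := fun p => ENNReal.ofReal ((‖p.1‖ ^ 2 + p.2 ^ 2) ^
    (-(((d:ℝ) + 1 + α) / 2)) * M p.2)) (by fun_prop)]
  rw [Measure.volume_eq_prod, lintegral_prod_symm' _ (by fun_prop),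
    ← lintegral_const_mul' _ _ ENNReal.ofReal_ne_top]
  refine lintegral_congr_ae ?_
  have hne : ∀ᵐ h : ℝ, h ≠ 0 := by simp [ae_iff]
  filter_upwards [hne] with h hh
  have hp : 0 < h ^ 2 := by positivity
  have e1 : ∀ v : EuclideanSpace ℝ (Fin d), ENNReal.ofReal ((‖v‖ ^ 2 + h ^ 2) ^
    (-(((d:ℝ) + 1 + α) / 2)) * M h) = ENNReal.ofReal ((‖v‖ ^ 2 + h ^ 2) ^
    (-(((d:ℝ) + 1 + α) / 2))) * ENNReal.ofReal (M h) := fun v => ENNReal.ofReal_mul (by positivity)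
  simp_rw [e1]
  rw [lintegral_mul_const' _ _ ENNReal.ofReal_ne_top, fh_fiber d (by linarith) hp,
    ENNReal.ofReal_mul (by positivity : 0 ≤ |h| ^ (-1 - α)), ← mul_assoc,
    ← ENNReal.ofReal_mul hC.le, ← sq_abs, ← rpow_two, ← rpow_mul (abs_nonneg _)]
  congr 5
  all_goals ring_nf

lemma fh_kernel (d : ℕ) {α : ℝ} (hα : 0 < α) (hα2 : α < 2) :
    Integrable (fun z : EuclideanSpace ℝ (Fin (d + 1)) =>
      ‖z‖ ^ (-((d:ℝ) + 1 + α)) * min 1 (‖z‖ ^ 2)) := by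
  rw [integrable_fun_norm_addHaar volume (f := fun y => y ^ (-((d:ℝ) + 1 + α)) * min 1 (y ^ 2))]
  rw [finrank_euclideanSpace_fin, Nat.add_sub_cancel, ← Ioc_union_Ioi_eq_Ioi zero_le_one]
  have key : ∀ y : ℝ, 0 < y → y ^ d * y ^ (-((d:ℝ) + 1 + α)) = y ^ (-1 - α) := by
    intro y hy
    rw [← rpow_natCast, ← rpow_add hy]; ring_nf
  refine IntegrableOn.union ?_ ?_
  · have : IntegrableOn (fun y : ℝ => y ^ (1 - α)) (Ioc 0 1) := by
      rw [← intervalIntegrable_iff_integrableOn_Ioc_of_le zero_le_one]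
      exact intervalIntegral.intervalIntegrable_rpow' (by linarith)
    refine this.congr_fun (fun y hy => ?_) measurableSet_Ioc
    have hm : min 1 (y ^ 2) = y ^ 2 := min_eq_right (pow_le_one₀ hy.1.le hy.2)
    simp only [hm, smul_eq_mul]
    rw [← mul_assoc, key y hy.1, ← rpow_two, ← rpow_add hy.1]; ring_nf
  · refine (integrableOn_Ioi_rpow_of_lt (a := -1 - α) (by linarith) one_pos).congr_fun
      (fun y hy => ?_) measurableSet_Ioi
    have hy1 : 1 < y := hy
    have hm : min 1 (y ^ 2) = 1 := min_eq_left (one_le_pow₀ hy1.le)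
    simp only [hm, smul_eq_mul, mul_one]
    rw [key y (by linarith)]

lemma fh_cross (d : ℕ) {α : ℝ} (hα : 0 < α) (hα2 : α < 2) {ε : ℝ} (hε : 0 < ε) :
    ∃ φ : EuclideanSpace ℝ (Fin d) → ℝ, ContDiff ℝ (⊤ : ℕ∞) φ ∧ HasCompactSupport φ ∧
      0 < ∫ x, φ x ^ 2 ∧
      ∫⁻ z : EuclideanSpace ℝ (Fin (d + 1)),
        ENNReal.ofReal (‖z‖ ^ (-((d:ℝ) + 1 + α)) * fhN volume φ (fhE d z).1) ≤
      ENNReal.ofReal (ε * ∫ x, φ x ^ 2) := by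
  obtain ⟨G, hG1, hG2, hG3⟩ := fh_exists_bump (E := EuclideanSpace ℝ (Fin d)) volume
  obtain ⟨c, hc, hN⟩ := fhN_lip volume hG1 hG2
  have hk := fh_kernel d hα hα2
  set k : EuclideanSpace ℝ (Fin (d + 1)) → ℝ :=
    fun z => ‖z‖ ^ (-((d:ℝ) + 1 + α)) * min 1 (‖z‖ ^ 2) with hkdef
  have hk0 : ∀ z, 0 ≤ k z := fun z => mul_nonneg (rpow_nonneg (norm_nonneg _) _) (by positivity)
  set V := ∫ x, G x ^ 2 with hV
  set A := max (4 * V) c with hA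
  have hA0 : 0 ≤ A := le_max_of_le_right hc
  have hAN : ∀ w, fhN volume G w ≤ A * min 1 (‖w‖ ^ 2) := by
    intro w
    rcases le_total 1 (‖w‖ ^ 2) with h | h
    · rw [min_eq_left h, mul_one]
      exact (fhN_le volume hG1.continuous hG2 w).trans (le_max_left _ _)
    · rw [min_eq_right h]
      exact (hN w).trans (mul_le_mul_of_nonneg_right (le_max_right _ _) (by positivity))
  obtain ⟨R, hR1, hR0⟩ : ∃ R : ℝ, R ^ (-α) * (A * ∫ z, k z) ≤ ε * V ∧ 0 < R := by
    have ht : Tendsto (fun R : ℝ => R ^ (-α) * (A * ∫ z, k z)) atTop (𝓝 (0 * (A * ∫ z, k z))) :=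
      (tendsto_rpow_neg_atTop hα).mul_const _
    rw [zero_mul] at ht
    exact ((ht.eventually_le_const (by positivity : 0 < ε * V)).and (eventually_gt_atTop 0)).exists
  have hRi : 0 < R⁻¹ := inv_pos.2 hR0
  refine ⟨fun x => G (R⁻¹ • x), hG1.comp (contDiff_const_smul R⁻¹),
    hG2.comp_smul (inv_ne_zero hR0.ne'), ?_, ?_⟩
  · rw [fh_scale_sq volume G hR0]; positivity
  · rw [fh_scale_sq volume G hR0, finrank_euclideanSpace_fin]
    have hle : ∀ z : EuclideanSpace ℝ (Fin (d + 1)), ‖z‖ ^ (-((d:ℝ) + 1 + α)) *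
        fhN volume (fun x => G (R⁻¹ • x)) (fhE d z).1 ≤
        (R ^ d * A * R ^ (-((d:ℝ) + 1 + α))) * k (R⁻¹ • z) := by
      intro z
      rw [fhN_scale volume G hR0, finrank_euclideanSpace_fin]
      have h1 : fhN volume G (R⁻¹ • (fhE d z).1) ≤ A * min 1 (‖R⁻¹ • z‖ ^ 2) := by
        refine (hAN _).trans ?_
        gcongr
        rw [norm_smul, norm_smul]
        gcongr
        have := fhE_norm d z
        exact (pow_le_pow_iff_left₀ (norm_nonneg _) (norm_nonneg _) two_ne_zero).1
          (by nlinarith [sq_nonneg (fhE d z).2])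
      have h2 : ‖R⁻¹ • z‖ ^ (-((d:ℝ) + 1 + α)) = R ^ ((d:ℝ) + 1 + α) * ‖z‖ ^ (-((d:ℝ) + 1 + α)) := by
        rw [norm_smul, Real.norm_of_nonneg hRi.le, mul_rpow hRi.le (norm_nonneg _),
          inv_rpow hR0.le, rpow_neg hR0.le, inv_inv]
      simp only [hkdef]
      rw [h2, rpow_neg hR0.le]
      have h3 : 0 < R ^ ((d:ℝ) + 1 + α) := by positivity
      have h4 : 0 ≤ ‖z‖ ^ (-((d:ℝ) + 1 + α)) := rpow_nonneg (norm_nonneg _) _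
      have h5 : 0 < R ^ d := by positivity
      have h6 := mul_le_mul_of_nonneg_left h1 (mul_nonneg h4 h5.le)
      calc _ = ‖z‖ ^ (-((d:ℝ) + 1 + α)) * R ^ d * fhN volume G (R⁻¹ • (fhE d z).1) := by ring
        _ ≤ _ := h6
        _ = _ := by field_simp
    have hki : Integrable (fun z => (R ^ d * A * R ^ (-((d:ℝ) + 1 + α))) * k (R⁻¹ • z)) :=
      ((integrable_comp_smul_iff volume k hRi.ne').2 hk).const_mul _
    refine (lintegral_mono fun z => ENNReal.ofReal_le_ofReal (hle z)).trans ?_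
    rw [← ofReal_integral_eq_lintegral_ofReal hki (Eventually.of_forall fun z =>
      mul_nonneg (by positivity) (hk0 _)), integral_const_mul,
      Measure.integral_comp_inv_smul_of_nonneg volume k hR0.le, finrank_euclideanSpace_fin, smul_eq_mul]
    apply ENNReal.ofReal_le_ofReal
    have e : R ^ (-((d:ℝ) + 1 + α)) * R ^ (d + 1) = R ^ (-α) := by
      rw [← rpow_natCast, ← rpow_add hR0]; push_cast; ring_nf
    calc R ^ d * A * R ^ (-((d:ℝ) + 1 + α)) * (R ^ (d + 1) * ∫ z, k z)
        = R ^ d * ((R ^ (-((d:ℝ) + 1 + α)) * R ^ (d + 1)) * (A * ∫ z, k z)) := by ring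
      _ ≤ R ^ d * (ε * V) := by rw [e]; gcongr
      _ = _ := by ring


noncomputable def fhU (d : ℕ) (φ : EuclideanSpace ℝ (Fin d) → ℝ) (f : ℝ → ℝ)
    (x : EuclideanSpace ℝ (Fin (d + 1))) : ℝ := φ (fhE d x).1 * f (fhE d x).2

lemma fhU_contDiff (d : ℕ) {φ : EuclideanSpace ℝ (Fin d) → ℝ} {f : ℝ → ℝ}
    (hφ : ContDiff ℝ (⊤ : ℕ∞) φ) (hf : ContDiff ℝ (⊤ : ℕ∞) f) :
    ContDiff ℝ (⊤ : ℕ∞) (fhU d φ f) :=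
  (hφ.comp (contDiff_fst.comp (fhE_contDiff d))).mul (hf.comp (contDiff_snd.comp (fhE_contDiff d)))

lemma fhU_tsupport (d : ℕ) (φ : EuclideanSpace ℝ (Fin d) → ℝ) (f : ℝ → ℝ) :
    tsupport (fhU d φ f) ⊆ (fhE d) ⁻¹' (tsupport φ ×ˢ tsupport f) := by
  refine closure_minimal (fun x hx => ?_)
    (((isClosed_tsupport φ).prod (isClosed_tsupport f)).preimage (fhE_contDiff d).continuous)
  have hx' : φ (fhE d x).1 * f (fhE d x).2 ≠ 0 := hx
  exact ⟨subset_tsupport _ (left_ne_zero_of_mul hx'), subset_tsupport _ (right_ne_zero_of_mul hx')⟩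

lemma fhU_hcs (d : ℕ) {φ : EuclideanSpace ℝ (Fin d) → ℝ} {f : ℝ → ℝ}
    (hφ : HasCompactSupport φ) (hf : HasCompactSupport f) : HasCompactSupport (fhU d φ f) := by
  refine Metric.isCompact_of_isClosed_isBounded (isClosed_tsupport _) ?_
  obtain ⟨a, ha⟩ := hφ.isCompact.isBounded.exists_norm_le
  obtain ⟨b, hb⟩ := hf.isCompact.isBounded.exists_norm_le
  refine isBounded_iff_forall_norm_le.2 ⟨a + b, fun x hx => ?_⟩
  obtain ⟨h1, h2⟩ := fhU_tsupport d φ f hx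
  have h1 := ha _ h1
  have h2 := hb _ h2
  have h3 := fhE_norm d x
  have h4 := norm_nonneg (fhE d x).1
  have h5 := norm_nonneg (fhE d x).2
  have h6 : (fhE d x).2 ^ 2 = ‖(fhE d x).2‖ ^ 2 := by rw [Real.norm_eq_abs, sq_abs]
  rw [h6] at h3
  refine (pow_le_pow_iff_left₀ (norm_nonneg _) (by linarith) two_ne_zero).1 ?_
  nlinarith [mul_nonneg (h4.trans h1) (h5.trans h2)]

lemma fhU_int (d : ℕ) (p : EuclideanSpace ℝ (Fin d) → ℝ) (q : ℝ → ℝ) :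
    ∫ x, p (fhE d x).1 * q (fhE d x).2 = (∫ x, p x) * ∫ s, q s := by
  rw [(fhE_mp d).integral_comp' (fun z => p z.1 * q z.2), Measure.volume_eq_prod,
    integral_prod_mul]

lemma fhU_N (d : ℕ) {φ : EuclideanSpace ℝ (Fin d) → ℝ} {f : ℝ → ℝ}
    (hφ : ContDiff ℝ (⊤ : ℕ∞) φ) (hf : ContDiff ℝ (⊤ : ℕ∞) f)
    (hφs : HasCompactSupport φ) (hfs : HasCompactSupport f) (z : EuclideanSpace ℝ (Fin (d + 1))) :
    fhN volume (fhU d φ f) z ≤ (∫ x, φ x ^ 2) * fhN volume f (fhE d z).2 +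
      (∫ s, f s ^ 2) * fhN volume φ (fhE d z).1 := by
  have e1 := fhN_eq volume (fhU_contDiff d hφ hf).continuous (fhU_hcs d hφs hfs) z
  have e2 := fhN_eq volume hφ.continuous hφs (fhE d z).1
  have e3 := fhN_eq volume hf.continuous hfs (fhE d z).2
  have i1 : ∫ x, fhU d φ f x ^ 2 = (∫ x, φ x ^ 2) * ∫ s, f s ^ 2 := by
    rw [← fhU_int d (fun x => φ x ^ 2) (fun s => f s ^ 2)]
    simp only [fhU, mul_pow]
  have i2 : ∫ x, fhU d φ f x * fhU d φ f (x + z) =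
      (∫ x, φ x * φ (x + (fhE d z).1)) * ∫ s, f s * f (s + (fhE d z).2) := by
    rw [← fhU_int d (fun x => φ x * φ (x + (fhE d z).1)) (fun s => f s * f (s + (fhE d z).2))]
    simp only [fhU, fhE_add, Prod.fst_add, Prod.snd_add]
    congr 1; ext x; ring
  have n2 := fhN_nonneg volume φ (fhE d z).1
  have n3 := fhN_nonneg volume f (fhE d z).2
  rw [i1, i2] at e1
  rw [e2] at n2
  rw [e3] at n3
  rw [e1, e2, e3]
  nlinarith [mul_nonneg n2 n3]

lemma fhU_weight (d : ℕ) (α : ℝ) (φ : EuclideanSpace ℝ (Fin d) → ℝ) (f : ℝ → ℝ) :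
    ∫ x in halfSpace d, fhU d φ f x ^ 2 * x (Fin.last d) ^ (-α) =
      (∫ x, φ x ^ 2) * ∫ s in Ioi 0, f s ^ 2 * s ^ (-α) := by
  have h1 : halfSpace d = (fhE d) ⁻¹' (univ ×ˢ Ioi 0) := by
    ext x; simp [halfSpace, fhE_snd]
  have h2 := (fhE_mp d).setIntegral_preimage_emb (fhE d).measurableEmbedding
    (fun p => φ p.1 ^ 2 * (f p.2 ^ 2 * p.2 ^ (-α))) (univ ×ˢ Ioi 0)
  have h3 := setIntegral_prod_mul (μ := (volume : Measure (EuclideanSpace ℝ (Fin d))))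
    (ν := (volume : Measure ℝ)) (fun x => φ x ^ 2)
    (fun s => f s ^ 2 * s ^ (-α)) univ (Ioi 0)
  rw [Measure.restrict_univ] at h3
  rw [← h3, h1]
  rw [Measure.volume_eq_prod] at h2
  rw [← h2]
  simp only [fhU, mul_pow, fhE_snd, mul_assoc]

lemma fh_lint_double {E : Type*} [NormedAddCommGroup E] [InnerProductSpace ℝ E]
    [FiniteDimensional ℝ E] [MeasurableSpace E] [BorelSpace E] {u : E → ℝ} (hc : Continuous u)
    (hs : HasCompactSupport u) (q : ℝ) :
    ∫⁻ x, ∫⁻ y, ENNReal.ofReal ((u x - u y) ^ 2 / ‖x - y‖ ^ q) =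
      ∫⁻ z, ENNReal.ofReal (‖z‖ ^ (-q) * fhN volume u z) := by
  have h1 : ∀ x, ∫⁻ y, ENNReal.ofReal ((u x - u y) ^ 2 / ‖x - y‖ ^ q) =
      ∫⁻ z, ENNReal.ofReal (‖z‖ ^ (-q) * (u (x + z) - u x) ^ 2) := by
    intro x
    rw [← lintegral_add_left_eq_self _ x]
    refine lintegral_congr fun z => ?_
    congr 1
    rw [show x - (x + z) = -z by abel, norm_neg, rpow_neg (norm_nonneg _), div_eq_mul_inv]
    ring
  simp_rw [h1]
  have hm := hc.measurable
  rw [lintegral_lintegral_swap (by fun_prop)]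
  refine lintegral_congr fun z => ?_
  have hi : Integrable (fun x => (u (x + z) - u x) ^ 2) := by
    have := (fh_expand volume hc hs z 1 1).1
    refine this.congr (Eventually.of_forall fun x => ?_)
    simp only; ring
  rw [fhN, ← integral_const_mul, ofReal_integral_eq_lintegral_ofReal (hi.const_mul _)]
  exact Eventually.of_forall fun x => mul_nonneg (rpow_nonneg (norm_nonneg _) _) (sq_nonneg _)

lemma fh_double_le {E : Type*} [NormedAddCommGroup E] [InnerProductSpace ℝ E]
    [FiniteDimensional ℝ E] [MeasurableSpace E] [BorelSpace E] {u : E → ℝ} (hc : Continuous u)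
    (q : ℝ) {B : ℝ} (hB : 0 ≤ B)
    (h : ∫⁻ x, ∫⁻ y, ENNReal.ofReal ((u x - u y) ^ 2 / ‖x - y‖ ^ q) ≤ ENNReal.ofReal B) :
    ∫ x, ∫ y, (u x - u y) ^ 2 / ‖x - y‖ ^ q ≤ B := by
  have hm := hc.measurable
  have h0 : ∀ x y, 0 ≤ (u x - u y) ^ 2 / ‖x - y‖ ^ q := fun x y =>
    div_nonneg (sq_nonneg _) (rpow_nonneg (norm_nonneg _) _)
  have hle : ∫⁻ x, ENNReal.ofReal (∫ y, (u x - u y) ^ 2 / ‖x - y‖ ^ q) ≤ ENNReal.ofReal B := by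
    refine le_trans (lintegral_mono fun x => ?_) h
    rw [integral_eq_lintegral_of_nonneg_ae (Eventually.of_forall (h0 x))
      (Measurable.aestronglyMeasurable (by fun_prop))]
    exact ENNReal.ofReal_toReal_le
  by_cases hi : Integrable (fun x => ∫ y, (u x - u y) ^ 2 / ‖x - y‖ ^ q)
  · rw [← ofReal_integral_eq_lintegral_ofReal hi
      (Eventually.of_forall fun x => integral_nonneg (h0 x))] at hle
    exact (ENNReal.ofReal_le_ofReal_iff hB).1 hle
  · rw [integral_undef hi]; exact hB

lemma fh_const (d : ℕ) {α : ℝ} (hα0 : 0 < α) (hα2 : α < 2) :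
    fracLapConst (d + 1) α *
      (π ^ ((d:ℝ) / 2) * Gamma ((1 + α) / 2) / Gamma (((d:ℝ) + 1 + α) / 2)) *
      (Gamma ((1 + α) / 2) * 2 ^ (-α) * |Gamma (-α / 2)| / √π) = Gamma ((1 + α) / 2) ^ 2 / π := by
  have hg : Gamma (-α / 2) ≠ 0 := by
    refine Gamma_ne_zero fun m hm => ?_
    have h1 : (m:ℝ) < 1 := by linarith
    have h2 : m = 0 := by
      have : m < 1 := by exact_mod_cast h1
      omega
    subst h2
    simp at hm
    linarith
  have hg' : |Gamma (-α / 2)| ≠ 0 := abs_ne_zero.2 hg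
  have hG : Gamma (((d:ℝ) + 1 + α) / 2) ≠ 0 := (Gamma_pos_of_pos (by positivity)).ne'
  have hp : π ^ (((d:ℝ) + 1) / 2) * √π = π ^ ((d:ℝ) / 2) * π := by
    rw [sqrt_eq_rpow, ← rpow_add pi_pos]
    nth_rw 3 [← rpow_one π]
    rw [← rpow_add pi_pos]; ring_nf
  have hp1 : π ^ (((d:ℝ) + 1) / 2) ≠ 0 := by positivity
  have hp2 : √π ≠ 0 := by positivity
  have hp3 : π ^ ((d:ℝ) / 2) ≠ 0 := by positivity
  have h2 : (2:ℝ) ^ (-α) ≠ 0 := by positivity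
  unfold fracLapConst
  push_cast
  generalize π ^ (((d:ℝ) + 1) / 2) = X at *
  generalize π ^ ((d:ℝ) / 2) = Y at *
  generalize √π = Z at *
  generalize (2:ℝ) ^ (-α) = W at *
  generalize |Gamma (-α / 2)| = V at *
  generalize Gamma (((d:ℝ) + 1 + α) / 2) = U at *
  have hpi := pi_ne_zero
  calc _ = Gamma ((1 + α) / 2) ^ 2 * Y / (X * Z) := by field_simp
    _ = _ := by rw [hp]; field_simp

theorem fractional_hardy_killed_optimal (d : ℕ) (α : ℝ) (hα0 : 0 < α) (hα2 : α < 2)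
    (K : ℝ) (hK : Real.Gamma ((1 + α) / 2) ^ 2 / Real.pi < K) :
    ∃ u : EuclideanSpace ℝ (Fin (d + 1)) → ℝ, ContDiff ℝ (⊤ : ℕ∞) u ∧ HasCompactSupport u ∧
      tsupport u ⊆ halfSpace d ∧
      (1 / 2) * fracLapConst (d + 1) α *
          ∫ x : EuclideanSpace ℝ (Fin (d + 1)), ∫ y : EuclideanSpace ℝ (Fin (d + 1)),
            (u x - u y) ^ 2 / ‖x - y‖ ^ ((d : ℝ) + 1 + α) <
        K * ∫ x in halfSpace d, u x ^ 2 * x (Fin.last d) ^ (-α) := by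
  have hconst := fh_const d hα0 hα2
  set A := fracLapConst (d + 1) α with hA
  have hA0 : 0 ≤ A := by
    rw [hA]; unfold fracLapConst
    exact div_nonneg (Gamma_pos_of_pos (by positivity)).le (by positivity)
  have hC0 : 0 ≤ π ^ ((d:ℝ) / 2) * Gamma ((1 + α) / 2) / Gamma (((d:ℝ) + 1 + α) / 2) :=
    div_nonneg (mul_nonneg (by positivity) (Gamma_pos_of_pos (by positivity)).le)
      (Gamma_pos_of_pos (by positivity)).le
  have hS0 : 0 ≤ Gamma ((1 + α) / 2) * 2 ^ (-α) * |Gamma (-α / 2)| / √π := by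
    have := (Gamma_pos_of_pos (by positivity : 0 < (1 + α) / 2)).le
    positivity
  have hpr := @fh_project d α hα0
  have h1D := fun {ε : ℝ} (hε : 0 < ε) => fh_oneD hα0 hα2 hε
  set C := π ^ ((d:ℝ) / 2) * Gamma ((1 + α) / 2) / Gamma (((d:ℝ) + 1 + α) / 2) with hC
  set S := Gamma ((1 + α) / 2) * 2 ^ (-α) * |Gamma (-α / 2)| / √π with hS
  set κ := Gamma ((1 + α) / 2) ^ 2 / π with hκ
  set δ := K - κ with hδ
  have hδ0 : 0 < δ := sub_pos.2 hK
  obtain ⟨f, hf, hfs, hft, hW, hfE⟩ := h1D (ε := δ / (2 * (A * C + 1))) (by positivity)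
  set W := ∫ s in Ioi 0, f s ^ 2 * s ^ (-α) with hWd
  set F := ∫ s, f s ^ 2 with hF
  have hF0 : 0 ≤ F := integral_nonneg fun _ => sq_nonneg _
  obtain ⟨φ, hφ, hφs, hΦ, hφE⟩ := fh_cross d hα0 hα2
    (ε := δ * W / (A * F + 1)) (by positivity)
  set Φ := ∫ x, φ x ^ 2 with hΦd
  set ε1 := δ / (2 * (A * C + 1)) with hε1
  set ε2 := δ * W / (A * F + 1) with hε2
  have hε10 : 0 < ε1 := by positivity
  have hε20 : 0 < ε2 := by positivity
  have hu := fhU_contDiff d hφ hf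
  have hus := fhU_hcs d hφs hfs
  refine ⟨fhU d φ f, hu, hus, fun x hx => hft (fhU_tsupport d φ f hx).2, ?_⟩
  rw [fhU_weight]
  have hB0 : 0 ≤ Φ * (C * (2 * (S + ε1) * W)) + F * (ε2 * Φ) := by positivity
  have hT : ∫ x, ∫ y, (fhU d φ f x - fhU d φ f y) ^ 2 / ‖x - y‖ ^ ((d : ℝ) + 1 + α) ≤
      Φ * (C * (2 * (S + ε1) * W)) + F * (ε2 * Φ) := by
    refine fh_double_le hu.continuous _ hB0 ?_
    rw [fh_lint_double hu.continuous hus]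
    have hmf := fhN_continuous volume hf.continuous
    have hmφ := fhN_continuous volume hφ.continuous
    calc _ ≤ ∫⁻ z : EuclideanSpace ℝ (Fin (d + 1)),
          (ENNReal.ofReal Φ * ENNReal.ofReal (‖z‖ ^ (-((d:ℝ) + 1 + α)) * fhN volume f (fhE d z).2) +
          ENNReal.ofReal F *
            ENNReal.ofReal (‖z‖ ^ (-((d:ℝ) + 1 + α)) * fhN volume φ (fhE d z).1)) := by
          refine lintegral_mono fun z => ?_
          have hz : 0 ≤ ‖z‖ ^ (-((d:ℝ) + 1 + α)) := rpow_nonneg (norm_nonneg _) _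
          have n2 := fhN_nonneg volume φ (fhE d z).1
          have n3 := fhN_nonneg volume f (fhE d z).2
          rw [← ENNReal.ofReal_mul hΦ.le, ← ENNReal.ofReal_mul hF0,
            ← ENNReal.ofReal_add (by positivity) (by positivity)]
          apply ENNReal.ofReal_le_ofReal
          refine (mul_le_mul_of_nonneg_left (fhU_N d hφ hf hφs hfs z) hz).trans (le_of_eq ?_)
          ring
      _ = ENNReal.ofReal Φ * (ENNReal.ofReal C *
            ∫⁻ h, ENNReal.ofReal (|h| ^ (-1 - α) * fhN volume f h)) +
          ENNReal.ofReal F * ∫⁻ z : EuclideanSpace ℝ (Fin (d + 1)),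
            ENNReal.ofReal (‖z‖ ^ (-((d:ℝ) + 1 + α)) * fhN volume φ (fhE d z).1) := by
          rw [lintegral_add_left (by fun_prop), lintegral_const_mul' _ _ ENNReal.ofReal_ne_top,
            lintegral_const_mul' _ _ ENNReal.ofReal_ne_top, hpr hmf]
      _ ≤ ENNReal.ofReal Φ * (ENNReal.ofReal C * ENNReal.ofReal (2 * (S + ε1) * W)) +
          ENNReal.ofReal F * ENNReal.ofReal (ε2 * Φ) := by gcongr
      _ = _ := by
          rw [← ENNReal.ofReal_mul hC0, ← ENNReal.ofReal_mul hΦ.le, ← ENNReal.ofReal_mul hF0,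
            ← ENNReal.ofReal_add (by positivity) (by positivity)]
  have b1 : A * C * ε1 < δ / 2 := by
    rw [hε1, mul_div_assoc', div_lt_div_iff₀ (by positivity) two_pos]
    nlinarith [mul_nonneg hA0 hC0]
  have b2 : A * F * ε2 < δ * W := by
    rw [hε2, mul_div_assoc', div_lt_iff₀ (by positivity)]
    nlinarith [mul_pos hδ0 hW]
  have hΦW : 0 < Φ * W := mul_pos hΦ hW
  calc 1 / 2 * A * _ ≤ 1 / 2 * A * (Φ * (C * (2 * (S + ε1) * W)) + F * (ε2 * Φ)) :=
        mul_le_mul_of_nonneg_left hT (by positivity)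
    _ = (A * C * S + A * C * ε1) * (Φ * W) + 1 / 2 * (A * F * ε2) * Φ := by ring
    _ < (κ + δ / 2) * (Φ * W) + 1 / 2 * (δ * W) * Φ := by
        rw [hconst]
        gcongr
    _ = K * (Φ * W) := by rw [hδ]; ring
end

section
/- Let 0 < α < 2, d ≥ 1, D = {x ∈ ℝ^d : x_d > 0}, and let −1 < r < α. There exists a constant c > 0 (depending only on d, α, r) such that for every a > 0 and every x ∈ D, ∫_{D \ B(x,a)} y_d^r / |x − y|^{d+α} dy ≤ c · a^{−α} · (max(a, x_d))^r. -/
open MeasureTheory Real Set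

theorem rpow_comp_aux {u v K r : ℝ} (hu : 0 < u) (hv : 0 < v) (hK : 1 ≤ K)
    (h1 : u ≤ K * v) (h2 : v ≤ K * u) : u ^ r ≤ K ^ |r| * v ^ r := by
  have hK0 : 0 < K := by linarith
  rcases le_or_gt 0 r with hr | hr
  · rw [abs_of_nonneg hr, ← Real.mul_rpow hK0.le hv.le]
    exact Real.rpow_le_rpow hu.le h1 hr
  · rw [abs_of_neg hr]
    have h3 : (K * u) ^ r ≤ v ^ r := Real.rpow_le_rpow_of_nonpos hv h2 hr.le
    rw [Real.mul_rpow hK0.le hu.le] at h3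
    calc u ^ r = K ^ (-r) * (K ^ r * u ^ r) := by
          rw [← mul_assoc, ← Real.rpow_add hK0]; simp
      _ ≤ _ := by gcongr

theorem one_dim_aux (r : ℝ) (hr : -1 < r) :
    ∃ C : ℝ, 0 < C ∧ ∀ R t₀ : ℝ, 0 < R → 0 < t₀ →
      ∫⁻ t in {t : ℝ | 0 < t ∧ |t - t₀| < R}, ENNReal.ofReal (t ^ r) ≤
        ENNReal.ofReal (C * R * max R t₀ ^ r) := by
  have hr' : 0 < r + 1 := by linarith
  refine ⟨3 * 3 ^ |r| / (r + 1) + 2 * 2 ^ |r|, by positivity, fun R t₀ hR ht₀ => ?_⟩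
  have hm : 0 < max R t₀ := lt_max_of_lt_left hR
  have hmr : 0 < max R t₀ ^ r := Real.rpow_pos_of_pos hm r
  rcases le_or_gt (2 * R) t₀ with h | h
  · have hmax : max R t₀ = t₀ := max_eq_right (by linarith)
    rw [hmax] at hmr ⊢
    calc ∫⁻ t in {t : ℝ | 0 < t ∧ |t - t₀| < R}, ENNReal.ofReal (t ^ r)
        ≤ ∫⁻ t in {t : ℝ | 0 < t ∧ |t - t₀| < R}, ENNReal.ofReal (2 ^ |r| * t₀ ^ r) := by
          apply setLIntegral_mono measurable_const
          rintro t ⟨h0, h1⟩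
          rw [abs_lt] at h1
          exact ENNReal.ofReal_le_ofReal
            (rpow_comp_aux h0 ht₀ (by norm_num) (by linarith) (by linarith))
      _ ≤ ENNReal.ofReal (2 ^ |r| * t₀ ^ r) * ENNReal.ofReal (2 * R) := by
          rw [setLIntegral_const]
          gcongr
          rw [← Real.volume_ball t₀ R]
          apply measure_mono
          rintro t ⟨-, h1⟩
          simpa [Real.dist_eq] using h1
      _ ≤ _ := by
          rw [← ENNReal.ofReal_mul (by positivity)]
          apply ENNReal.ofReal_le_ofReal
          have : 0 ≤ 3 * 3 ^ |r| / (r + 1) * R * t₀ ^ r := by positivity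
          nlinarith
  · have hR3 : (0:ℝ) ≤ 3 * R := by linarith
    have hint : IntegrableOn (fun t : ℝ => t ^ r) (Ioc 0 (3 * R)) := by
      rw [← intervalIntegrable_iff_integrableOn_Ioc_of_le hR3]
      exact intervalIntegral.intervalIntegrable_rpow' hr
    calc ∫⁻ t in {t : ℝ | 0 < t ∧ |t - t₀| < R}, ENNReal.ofReal (t ^ r)
        ≤ ∫⁻ t in Ioc 0 (3 * R), ENNReal.ofReal (t ^ r) := by
          apply lintegral_mono_set
          rintro t ⟨h0, h1⟩
          rw [abs_lt] at h1
          exact ⟨h0, by linarith⟩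
      _ = ENNReal.ofReal (∫ t in Ioc 0 (3 * R), t ^ r) := by
          rw [ofReal_integral_eq_lintegral_ofReal hint]
          filter_upwards [ae_restrict_mem measurableSet_Ioc] with t ht
          exact Real.rpow_nonneg ht.1.le r
      _ ≤ _ := by
          apply ENNReal.ofReal_le_ofReal
          rw [← intervalIntegral.integral_of_le hR3, integral_rpow (Or.inl hr),
            Real.zero_rpow hr'.ne', sub_zero, Real.rpow_add_one (by positivity)]
          have h3 : (3 * R) ^ r ≤ 3 ^ |r| * max R t₀ ^ r := by
            apply rpow_comp_aux (by positivity) hm (by norm_num)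
            · linarith [le_max_left R t₀]
            · apply max_le <;> linarith
          have h4 : (3 * R) ^ r * (3 * R) / (r + 1) ≤
              (3 ^ |r| * max R t₀ ^ r) * (3 * R) / (r + 1) := by gcongr
          have h5 : 0 ≤ 2 * 2 ^ |r| * R * max R t₀ ^ r := by positivity
          calc _ ≤ _ := h4
            _ = 3 * 3 ^ |r| / (r + 1) * R * max R t₀ ^ r := by ring
            _ ≤ _ := by linarith

theorem ball_aux (d : ℕ) (r : ℝ) (hr : -1 < r) :
    ∃ C : ℝ, 0 < C ∧ ∀ R : ℝ, 0 < R → ∀ x ∈ halfSpace d,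
      ∫⁻ y in halfSpace d ∩ Metric.ball x R, ENNReal.ofReal (y (Fin.last d) ^ r) ≤
        ENNReal.ofReal (C * R ^ (d + 1) * max R (x (Fin.last d)) ^ r) := by
  obtain ⟨C, hC, H⟩ := one_dim_aux r hr
  refine ⟨C * 2 ^ d, by positivity, fun R hR x hx => ?_⟩
  have hx' : 0 < x (Fin.last d) := hx
  set T : Set ℝ := {t : ℝ | 0 < t ∧ |t - x (Fin.last d)| < R} with hT
  have hTm : MeasurableSet T := by
    apply MeasurableSet.inter
    · exact measurableSet_Ioi
    · exact (isOpen_lt (f := fun t : ℝ => |t - x (Fin.last d)|) (by fun_prop)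
        continuous_const).measurableSet
  set x' : Fin d → ℝ := fun i => x ((Fin.last d).succAbove i) with hx'def
  set B : Set (Fin d → ℝ) := Metric.closedBall x' R with hB
  have hBm : MeasurableSet B := Metric.isClosed_closedBall.measurableSet
  have hmp := (volume_preserving_piFinSuccAbove (fun _ : Fin (d + 1) => ℝ) (Fin.last d)).comp
    (PiLp.volume_preserving_ofLp (Fin (d + 1)))
  set f : ℝ → ENNReal := T.indicator (fun t => ENNReal.ofReal (t ^ r)) with hf
  set g : (Fin d → ℝ) → ENNReal := B.indicator (fun _ => 1) with hg
  have hfm : Measurable f := Measurable.indicator (by fun_prop) hTm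
  have hgm : Measurable g := Measurable.indicator (by fun_prop) hBm
  have hSm : MeasurableSet (halfSpace d ∩ Metric.ball x R) := by
    apply MeasurableSet.inter _ Metric.isOpen_ball.measurableSet
    exact (isOpen_lt continuous_const (by fun_prop)).measurableSet
  have key : ∀ y ∈ halfSpace d ∩ Metric.ball x R, ENNReal.ofReal (y (Fin.last d) ^ r) ≤
      f (y (Fin.last d)) * g (fun i => y ((Fin.last d).succAbove i)) := by
    rintro y ⟨hy, hyb⟩
    rw [Metric.mem_ball, dist_eq_norm] at hyb
    have hc : ∀ i, |y i - x i| < R := fun i =>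
      lt_of_le_of_lt (by simpa using PiLp.norm_apply_le (y - x) i) hyb
    have h1 : y (Fin.last d) ∈ T := ⟨hy, hc _⟩
    have h2 : (fun i => y ((Fin.last d).succAbove i)) ∈ B := by
      rw [hB, Metric.mem_closedBall, dist_pi_le_iff hR.le]
      intro i
      rw [Real.dist_eq]
      exact (hc _).le
    rw [hf, hg, indicator_of_mem h1, indicator_of_mem h2, mul_one]
  calc ∫⁻ y in halfSpace d ∩ Metric.ball x R, ENNReal.ofReal (y (Fin.last d) ^ r)
      ≤ ∫⁻ y in halfSpace d ∩ Metric.ball x R,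
          f (y (Fin.last d)) * g (fun i => y ((Fin.last d).succAbove i)) :=
        setLIntegral_mono' hSm key
    _ ≤ ∫⁻ y : EuclideanSpace ℝ (Fin (d + 1)),
          f (y (Fin.last d)) * g (fun i => y ((Fin.last d).succAbove i)) :=
        setLIntegral_le_lintegral _ _
    _ = ∫⁻ z : ℝ × (Fin d → ℝ), f z.1 * g z.2 := by
        rw [← hmp.lintegral_comp (f := fun z : ℝ × (Fin d → ℝ) => f z.1 * g z.2)
          (by fun_prop)]
        rfl
    _ = (∫⁻ t, f t) * ∫⁻ w, g w :=
        lintegral_prod_mul hfm.aemeasurable hgm.aemeasurable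
    _ ≤ ENNReal.ofReal (C * R * max R (x (Fin.last d)) ^ r) * ENNReal.ofReal ((2 * R) ^ d) := by
        gcongr
        · rw [hf, lintegral_indicator hTm]
          exact H R _ hR hx'
        · rw [hg, lintegral_indicator hBm, setLIntegral_const, one_mul, hB,
            Real.volume_pi_closedBall _ hR.le, Fintype.card_fin]
    _ = _ := by
        rw [← ENNReal.ofReal_mul (by positivity)]
        congr 1
        ring

theorem integral_away_from_ball_bound (d : ℕ) (α r : ℝ) (hα0 : 0 < α) (hα2 : α < 2)
    (hr1 : -1 < r) (hrα : r < α) :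
    ∃ c : ℝ, 0 < c ∧ ∀ a : ℝ, 0 < a → ∀ x ∈ halfSpace d,
      (∫ y in halfSpace d \ Metric.ball x a,
          y (Fin.last d) ^ r / ‖x - y‖ ^ ((d : ℝ) + 1 + α)) ≤
        c * a ^ (-α) * max a (x (Fin.last d)) ^ r := by
  obtain ⟨C, hC, H⟩ := ball_aux d r hr1
  set s : ℝ := max r 0 with hs
  have hsα : s < α := max_lt hrα hα0
  set q : ℝ := 2 ^ (s - α) with hq
  have hq0 : 0 < q := by positivity
  have hq1 : q < 1 := Real.rpow_lt_one_of_one_lt_of_neg (by norm_num) (by linarith)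
  have hq1' : 0 < 1 - q := by linarith
  refine ⟨C * 2 ^ (d + 1) * 2 ^ s * (1 - q)⁻¹, by positivity, fun a ha x hx => ?_⟩
  have hx' : 0 < x (Fin.last d) := hx
  set m : ℝ := max a (x (Fin.last d)) with hm
  have hm0 : 0 < m := lt_max_of_lt_left ha
  set p : ℝ := (d : ℝ) + 1 + α with hp
  have hp0 : 0 < p := by positivity
  have hDm : MeasurableSet (halfSpace d) :=
    (isOpen_lt continuous_const (by fun_prop)).measurableSet
  set A : ℕ → Set (EuclideanSpace ℝ (Fin (d + 1))) := fun k =>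
    halfSpace d ∩ (Metric.ball x (2 * (2 ^ k * a)) \ Metric.ball x (2 ^ k * a)) with hA
  have hAm : ∀ k, MeasurableSet (A k) := fun k =>
    hDm.inter (Metric.isOpen_ball.measurableSet.diff Metric.isOpen_ball.measurableSet)
  have hcover : halfSpace d \ Metric.ball x a ⊆ ⋃ k, A k := by
    rintro y ⟨hy, hyb⟩
    rw [Metric.mem_ball, not_lt] at hyb
    obtain ⟨k, hk1, hk2⟩ := exists_nat_pow_near (x := dist y x / a) (y := 2)
      ((one_le_div ha).2 hyb) (by norm_num)
    rw [le_div_iff₀ ha] at hk1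
    rw [div_lt_iff₀ ha] at hk2
    refine mem_iUnion.2 ⟨k, hy, ?_, ?_⟩
    · rw [Metric.mem_ball]
      calc _ < _ := hk2
        _ = _ := by ring
    · rw [Metric.mem_ball, not_lt]
      exact hk1
  have hterm : ∀ k, ∫⁻ y in A k, ENNReal.ofReal ‖y (Fin.last d) ^ r / ‖x - y‖ ^ p‖ ≤
      ENNReal.ofReal (C * 2 ^ (d + 1) * 2 ^ s * a ^ (-α) * m ^ r * q ^ k) := by
    intro k
    set ρ : ℝ := 2 ^ k * a with hρ
    have hρ0 : 0 < ρ := by positivity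
    have hmax : max (2 * ρ) (x (Fin.last d)) ^ r ≤ (2 * 2 ^ k) ^ s * m ^ r := by
      have h2k : (1 : ℝ) ≤ 2 ^ k := one_le_pow₀ (by norm_num)
      have hρa : a ≤ 2 * ρ := by nlinarith
      have hM : m ≤ max (2 * ρ) (x (Fin.last d)) := max_le_max_right _ hρa
      rcases le_or_gt 0 r with h0 | h0
      · rw [hs, max_eq_left h0, ← Real.mul_rpow (by positivity) hm0.le]
        apply Real.rpow_le_rpow (hm0.le.trans hM) _ h0
        apply max_le
        · have := le_max_left a (x (Fin.last d))
          calc 2 * ρ = 2 * 2 ^ k * a := by rw [hρ]; ring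
            _ ≤ _ := by gcongr
        · have := le_max_right a (x (Fin.last d))
          nlinarith
      · rw [hs, max_eq_right h0.le, Real.rpow_zero, one_mul]
        exact Real.rpow_le_rpow_of_nonpos hm0 hM h0.le
    calc ∫⁻ y in A k, ENNReal.ofReal ‖y (Fin.last d) ^ r / ‖x - y‖ ^ p‖
        ≤ ∫⁻ y in A k, ENNReal.ofReal (ρ ^ (-p)) * ENNReal.ofReal (y (Fin.last d) ^ r) := by
          apply setLIntegral_mono' (hAm k)
          rintro y ⟨hy, -, hyb⟩
          have hy' : 0 < y (Fin.last d) := hy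
          rw [Metric.mem_ball, not_lt, dist_comm, dist_eq_norm] at hyb
          rw [← ENNReal.ofReal_mul (by positivity), Real.norm_of_nonneg (by positivity)]
          apply ENNReal.ofReal_le_ofReal
          rw [Real.rpow_neg hρ0.le, div_eq_inv_mul]
          gcongr
      _ = ENNReal.ofReal (ρ ^ (-p)) * ∫⁻ y in A k, ENNReal.ofReal (y (Fin.last d) ^ r) :=
          lintegral_const_mul' _ _ ENNReal.ofReal_ne_top
      _ ≤ ENNReal.ofReal (ρ ^ (-p)) *
          ENNReal.ofReal (C * (2 * ρ) ^ (d + 1) * max (2 * ρ) (x (Fin.last d)) ^ r) := by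
          gcongr
          refine (lintegral_mono_set ?_).trans (H (2 * ρ) (by positivity) x hx)
          exact fun y hy => ⟨hy.1, hy.2.1⟩
      _ ≤ _ := by
          rw [← ENNReal.ofReal_mul (by positivity)]
          apply ENNReal.ofReal_le_ofReal
          have e1 : ρ ^ (-p) * ρ ^ (d + 1) = a ^ (-α) * (2 ^ k) ^ (-α) := by
            rw [← Real.rpow_natCast ρ (d + 1), ← Real.rpow_add hρ0, mul_comm,
              ← Real.mul_rpow (by positivity) ha.le]
            congr 1
            rw [hp]; push_cast; ring
          have e2 : ((2:ℝ) ^ k) ^ (-α) * (2 ^ k) ^ s = q ^ k := by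
            rw [← Real.rpow_add (by positivity), hq, ← Real.rpow_natCast, ← Real.rpow_natCast,
              ← Real.rpow_mul (by norm_num), ← Real.rpow_mul (by norm_num)]
            congr 1
            ring
          calc ρ ^ (-p) * (C * (2 * ρ) ^ (d + 1) * max (2 * ρ) (x (Fin.last d)) ^ r)
              ≤ ρ ^ (-p) * (C * (2 * ρ) ^ (d + 1) * ((2 * 2 ^ k) ^ s * m ^ r)) := by gcongr
            _ = C * 2 ^ (d + 1) * 2 ^ s * m ^ r * (2 ^ k) ^ s * (ρ ^ (-p) * ρ ^ (d + 1)) := by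
                rw [Real.mul_rpow (x := 2) (y := 2 ^ k) (by norm_num) (by positivity), mul_pow]; ring
            _ = C * 2 ^ (d + 1) * 2 ^ s * a ^ (-α) * m ^ r * ((2 ^ k) ^ (-α) * (2 ^ k) ^ s) := by
                rw [e1]; ring
            _ = _ := by rw [e2]
  refine (Real.le_norm_self _).trans ((norm_integral_le_lintegral_norm _).trans ?_)
  apply ENNReal.toReal_le_of_le_ofReal (by positivity)
  calc _ ≤ ∫⁻ y in ⋃ k, A k, ENNReal.ofReal ‖y (Fin.last d) ^ r / ‖x - y‖ ^ p‖ :=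
        lintegral_mono_set hcover
    _ ≤ ∑' k, ∫⁻ y in A k, ENNReal.ofReal ‖y (Fin.last d) ^ r / ‖x - y‖ ^ p‖ :=
        lintegral_iUnion_le _ _
    _ ≤ ∑' k, ENNReal.ofReal (C * 2 ^ (d + 1) * 2 ^ s * a ^ (-α) * m ^ r * q ^ k) :=
        ENNReal.tsum_le_tsum hterm
    _ = _ := by
        rw [← ENNReal.ofReal_tsum_of_nonneg (fun k => by positivity)
          ((summable_geometric_of_lt_one hq0.le hq1).mul_left _), tsum_mul_left,
          tsum_geometric_of_lt_one hq0.le hq1]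
        congr 1
        ring
end
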